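/- arXiv:0803.3487 — 2 statements merged into one kernel-verified Lean document; each statement's English description precedes it below -/
import Mathlib

section
/- Let k be a fixed nonzero integer. For every ε > 0 there exists a constant C = C(k, ε) > 0 such that for every odd integer q ≥ 3, |N_q((2,2), (0,0); (k,k)) + N_q((2,2), (1,1); (k,k)) − φ(q)/2| ≤ C · q^{1/2 + ε}. In other words, the number of n ∈ U_q for which the smallest nonnegative residues modulo q of n^k and of its modular inverse n^{−k} have the same parity equals φ(q)/2 + O(q^{1/2 + ε}). -/
open scoped Classical

/-- `lehmerCount q m a k` is the quantity `N_q(m, a; k)`: the number of units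
`n ∈ U_q = {1 ≤ n < q : gcd(n,q) = 1}` such that for every `j` the smallest
nonnegative residue of `n^{k j}` modulo `q` (negative exponents being interpreted
via the modular inverse of `n`) is congruent to `a j` modulo `m j`. -/
noncomputable def lehmerCount (q : ℕ) [NeZero q] {s : ℕ} (m : Fin s → ℕ) (a : Fin s → ℤ)
    (k : Fin s → ℤ) : ℕ :=
  (Finset.univ.filter fun n : (ZMod q)ˣ =>
    ∀ j, ((((n ^ k j : (ZMod q)ˣ) : ZMod q).val : ℤ)) ≡ a j [ZMOD (m j : ℤ)]).card

/-!
With `σ x = (-1) ^ x.val`, the residues of `n ^ k` and `n ^ (-k)` have equal parity exactly when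
`σ (n ^ k) * σ (n ^ (-k)) = 1`, so the count differs from `φ(q) / 2` by half the sum of these
products. For odd `q` the Fourier coefficients of `σ` at `u` are `O(q / |q - 2 u|)`, so the sum is
controlled, up to logarithms, by the exponential sums `∑ ψ (u n ^ k + v n ^ (-k))`, and it suffices
to bound each of these by `q ^ (1 / 2 + ε)` times the square root of `gcd(u, v, q)`.

These sums are multiplicative in `q`. Modulo `p ^ r` with `r ≥ 2`, averaging over the substitutions
`n ↦ n (1 + p ^ m t)` leaves only approximate critical points of the phase, of which there are few.
Modulo `p`, detecting `k`-th powers by characters `χ` of order dividing `k` leaves the Kloosterman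
sums `∑ χ(x) ψ (u x + v / x)`. Their L-function is a polynomial of degree at most 2 whose inverse
roots `α, β` have `-(α ^ m + β ^ m)` as the corresponding sum over the extension of degree `m`.
Stepanov's method bounds these sums by `C p ^ (m / 2)` for even `m`, with `C` independent of `m`.
This forces `|α|, |β| ≤ √p`, which removes the constant and gives Weil's bound `2 √p`.
-/

open Finset Polynomial

/-! ### Stepanov's method -/

section Stepanov

variable {K : Type*} [Field K]

theorem linearIndependent_of_injective_natDegree {ι : Type*} [Finite ι] {v : ι → K[X]}
    (hv : ∀ i, v i ≠ 0) (hinj : Function.Injective fun i => (v i).natDegree) :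
    LinearIndependent K v := by
  have := Fintype.ofFinite ι
  refine Fintype.linearIndependent_iff.2 fun c hc i => ?_
  by_contra hi
  have hdisj : {j | j ∈ (univ : Finset ι) ∧ c j • v j ≠ 0}.Pairwise
      (Function.onFun Ne (degree ∘ fun j => c j • v j)) := by
    intro j hj k hk hjk h
    simp only [Set.mem_ofPred_eq, smul_ne_zero_iff] at hj hk
    simp only [Function.comp_apply, degree_smul_of_smul_regular _ (IsSMulRegular.of_ne_zero hj.2.1),
      degree_smul_of_smul_regular _ (IsSMulRegular.of_ne_zero hk.2.1)] at h
    exact hjk (hinj (natDegree_eq_natDegree h))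
  have hsup := degree_sum_eq_of_disjoint _ _ hdisj
  rw [hc, degree_zero] at hsup
  have hle : degree (c i • v i) ≤ ⊥ := hsup ▸ le_sup (f := fun j => degree (c j • v j)) (mem_univ i)
  exact smul_ne_zero hi (hv i) (degree_eq_bot.1 (le_bot_iff.1 hle))

theorem not_linearIndependent_of_natDegree_lt {ι : Type*} [Fintype ι] {w : ι → K[X]} {L : ℕ}
    (hw : ∀ i, (w i).natDegree < L) (hL : L < Fintype.card ι) : ¬ LinearIndependent K w := by
  intro hli
  let w' : ι → degreeLT K L := fun i => ⟨w i, mem_degreeLT.2 <|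
    degree_le_natDegree.trans_lt (by exact_mod_cast hw i)⟩
  have hli' : LinearIndependent K w' := LinearIndependent.of_comp (degreeLT K L).subtype hli
  have : Module.Finite K (degreeLT K L) := Module.Finite.equiv (degreeLTEquiv K L).symm
  have hcard := hli'.fintype_card_le_finrank
  rw [(degreeLTEquiv K L).finrank_eq, Module.finrank_fin_fun] at hcard
  exact hL.not_ge hcard

/-- The Laurent polynomial `∑_{i ≤ n} (a X^d + b X^{-d})^(p^i)` multiplied by `X^(d p^n)`, so that
it is a polynomial. Over a field with `p^(2n+2)` elements this is the first half of the trace of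
`a x^d + b x^{-d}`, and the second half is its `p^(n+1)`-st power. -/
noncomputable def halfTrace (p n d : ℕ) (a b : K) : K[X] :=
  ∑ i ∈ range (n + 1), X ^ (d * p ^ n - d * p ^ i) * (C a * X ^ (2 * d) + C b) ^ (p ^ i)

theorem natDegree_halfTrace {p n d : ℕ} (hp : 1 < p) (hd : d ≠ 0) {a : K} (ha : a ≠ 0) (b : K) :
    (halfTrace p n d a b).natDegree = 2 * (d * p ^ n) := by
  have hdeg : (C a * X ^ (2 * d) + C b).natDegree = 2 * d := by
    rw [natDegree_add_C, natDegree_C_mul_X_pow _ _ ha]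
  have hne : C a * X ^ (2 * d) + C b ≠ 0 := ne_zero_of_natDegree_gt (n := 0) (by omega)
  have hterm : ∀ i ≤ n, (X ^ (d * p ^ n - d * p ^ i) *
      (C a * X ^ (2 * d) + C b) ^ (p ^ i)).natDegree = d * p ^ n + d * p ^ i := by
    intro i hi
    have hle : d * p ^ i ≤ d * p ^ n := by gcongr; omega
    rw [natDegree_mul (pow_ne_zero _ X_ne_zero) (pow_ne_zero _ hne), natDegree_X_pow,
      natDegree_pow, hdeg, show p ^ i * (2 * d) = 2 * (d * p ^ i) by ring]
    omega
  have hpos : 0 < d * p ^ n := by positivity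
  rw [halfTrace, sum_range_succ, natDegree_add_eq_right_of_natDegree_lt, hterm n le_rfl, two_mul]
  rw [hterm n le_rfl, Nat.lt_iff_le_pred (by omega)]
  refine natDegree_sum_le_of_forall_le _ _ fun i hi => ?_
  have hin : i < n := mem_range.1 hi
  have hlt : d * p ^ i < d * p ^ n := by gcongr
  rw [hterm i hin.le]
  omega

theorem eval_halfTrace (p n d : ℕ) (a b : K) (hp : 0 < p) {x : K} (hx : x ≠ 0) :
    (halfTrace p n d a b).eval x =
      x ^ (d * p ^ n) * ∑ i ∈ range (n + 1), (a * x ^ d + b * x⁻¹ ^ d) ^ p ^ i := by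
  rw [halfTrace, eval_finsetSum, mul_sum]
  refine sum_congr rfl fun i hi => ?_
  have hle : d * p ^ i ≤ d * p ^ n := by gcongr; exacts [mem_range_succ_iff.1 hi]
  have hfactor : a * x ^ (2 * d) + b = x ^ d * (a * x ^ d + b * x⁻¹ ^ d) := by
    rw [inv_pow, two_mul, pow_add]
    field_simp
  rw [eval_mul, eval_pow, eval_X, eval_pow, eval_add, eval_mul, eval_C, eval_pow, eval_X, eval_C,
    hfactor, mul_pow, ← mul_assoc, ← pow_mul, ← pow_add, Nat.sub_add_cancel hle]

/-- The monomial `X^u H^j` in `X` and `H`, padded by a power of `X^D` so that it has total weight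
`m` in `(X^D, H)`. -/
noncomputable def paddedMonomial (D m : ℕ) (H : K[X]) (u j : ℕ) : K[X] :=
  X ^ u * H ^ j * X ^ (D * (m - j))

theorem paddedMonomial_ne_zero {D m : ℕ} {H : K[X]} (hH : H ≠ 0) (u j : ℕ) :
    paddedMonomial D m H u j ≠ 0 := by
  simp [paddedMonomial, hH]

theorem natDegree_paddedMonomial {D m : ℕ} {H : K[X]} (hH : H ≠ 0) (hdeg : H.natDegree = 2 * D)
    (u : ℕ) {j : ℕ} (hj : j ≤ m) :
    (paddedMonomial D m H u j).natDegree = u + D * j + D * m := by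
  obtain ⟨t, rfl⟩ := Nat.exists_eq_add_of_le hj
  rw [paddedMonomial, natDegree_mul (by simp [hH]) (by simp),
    natDegree_mul (by simp) (by simp [hH]), natDegree_X_pow, natDegree_X_pow, natDegree_pow,
    hdeg, Nat.add_sub_cancel_left]
  ring

theorem natDegree_paddedMonomial_le {D m : ℕ} {H : K[X]} (hdeg : H.natDegree ≤ 2 * D)
    (u : ℕ) {j : ℕ} (hj : j ≤ m) :
    (paddedMonomial D m H u j).natDegree ≤ u + D * j + D * m := by
  obtain ⟨t, rfl⟩ := Nat.exists_eq_add_of_le hj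
  calc (paddedMonomial D (j + t) H u j).natDegree
      ≤ u + j * (2 * D) + D * (j + t - j) := by
        refine natDegree_mul_le_of_le (natDegree_mul_le_of_le (natDegree_X_pow_le u) ?_)
          (natDegree_X_pow_le _)
        exact natDegree_pow_le.trans (Nat.mul_le_mul_left j hdeg)
    _ = u + D * j + D * (j + t) := by rw [Nat.add_sub_cancel_left]; ring

theorem eval_paddedMonomial {D m : ℕ} {H : K[X]} {x h : K} (hH : H.eval x = x ^ D * h)
    (u : ℕ) {j : ℕ} (hj : j ≤ m) :
    (paddedMonomial D m H u j).eval x = x ^ (D * m) * (x ^ u * h ^ j) := by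
  obtain ⟨t, rfl⟩ := Nat.exists_eq_add_of_le hj
  rw [paddedMonomial, eval_mul, eval_mul, eval_pow, eval_X, eval_pow, hH, eval_pow, eval_X,
    Nat.add_sub_cancel_left]
  ring

theorem injective_stepanov_exponent {p d P : ℕ} (hpd : p.Coprime d) (hp : 0 < p) (hP : 0 < P)
    (I : ℕ) : Function.Injective fun t : Fin P × Fin I × Fin p =>
      (t.1 : ℕ) + P * p * t.2.1 + d * P * t.2.2 := by
  rintro ⟨i, k, j⟩ ⟨i', k', j'⟩ h
  have hdigits : (i : ℕ) + P * (p * k + d * j) = i' + P * (p * k' + d * j') := by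
    simp only at h
    linarith
  have hi : (i : ℕ) = i' := by
    simpa [Nat.add_mul_mod_self_left, Nat.mod_eq_of_lt i.2, Nat.mod_eq_of_lt i'.2]
      using congrArg (· % P) hdigits
  have hkj : p * k + d * j = p * k' + d * j' :=
    Nat.eq_of_mul_eq_mul_left hP (by rwa [hi, Nat.add_left_cancel_iff] at hdigits)
  have hj : (j : ℕ) = j' := by
    have hmod : d * j ≡ d * j' [MOD p] := by
      simpa [Nat.ModEq, Nat.mul_add_mod] using congrArg (· % p) hkj
    exact (Nat.ModEq.cancel_left_of_coprime hpd hmod).eq_of_lt_of_lt j.2 j'.2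
  have hk : (k : ℕ) = k' :=
    Nat.eq_of_mul_eq_mul_left hp (by rwa [hj, Nat.add_right_cancel_iff] at hkj)
  simp only [Prod.mk.injEq]
  exact ⟨Fin.ext hi, Fin.ext hk, Fin.ext hj⟩

/-- If `h^R = s - h`, then raising a relation between the monomials `x^(i + R k) h^j` to the
`R`-th power, with `x ↦ x^R` an involution, gives a relation between the `x^(i R + k) (s - h)^j`. -/
theorem sum_pow_mul_eq_zero_of_frobenius {p r : ℕ} [ExpChar K p] {ι : Type*} [Fintype ι]
    (hinv : ∀ y : K, (y ^ p ^ r) ^ p ^ r = y) {s x h : K} (hh : h ^ p ^ r = s - h)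
    (e : ι → K) (i k j : ι → ℕ)
    (hrel : ∑ t, e t * (x ^ (i t * p ^ r + k t) * (s - h) ^ j t) = 0) :
    ∑ t, e t ^ p ^ r * (x ^ (i t + p ^ r * k t) * h ^ j t) = 0 := by
  have hpow : (∑ t, e t ^ p ^ r * (x ^ (i t + p ^ r * k t) * h ^ j t)) ^ p ^ r = 0 := by
    rw [sum_pow_char_pow, ← hrel]
    refine sum_congr rfl fun t _ => ?_
    rw [mul_pow, mul_pow, hinv, pow_right_comm h, hh, pow_add, mul_pow, pow_mul x (p ^ r),
      pow_right_comm _ (k t), hinv, pow_add, pow_mul x (i t)]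
  exact eq_zero_of_pow_eq_zero hpow

theorem linearIndependent_paddedMonomial {p d P : ℕ} (hpd : p.Coprime d) (hp : 0 < p) (hP : 0 < P)
    (I : ℕ) {H : K[X]} (hH : H ≠ 0) (hdeg : H.natDegree = 2 * (d * P)) :
    LinearIndependent K fun t : Fin P × Fin I × Fin p =>
      paddedMonomial (d * P) (p - 1) H (t.1 + P * p * t.2.1) t.2.2 := by
  refine linearIndependent_of_injective_natDegree (fun t => paddedMonomial_ne_zero hH _ _) ?_
  have hj (t : Fin P × Fin I × Fin p) : (t.2.2 : ℕ) ≤ p - 1 := Nat.le_sub_one_of_lt t.2.2.2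
  simp only [natDegree_paddedMonomial hH hdeg _ (hj _)]
  exact fun t t' h => injective_stepanov_exponent hpd hp hP I (Nat.add_right_cancel h)

theorem not_linearIndependent_paddedMonomial {p d P : ℕ} (hp : 0 < p) (hbig : 2 * d + 2 < P * p)
    {H : K[X]} (hdeg : H.natDegree ≤ 2 * (d * P)) :
    ¬ LinearIndependent K fun t : Fin P × Fin (P + 2 * d + 2) × Fin p =>
      paddedMonomial (d * P) (p - 1) H (t.1 * (P * p) + t.2.1) t.2.2 := by
  refine not_linearIndependent_of_natDegree_lt
    (L := P * p * P + (P + 2 * d + 2) + 2 * (d * P * (p - 1))) (fun t => ?_) ?_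
  · have hj : (t.2.2 : ℕ) ≤ p - 1 := Nat.le_sub_one_of_lt t.2.2.2
    have hi : t.1 * (P * p) ≤ P * p * P := by
      rw [mul_comm]
      exact Nat.mul_le_mul_left _ t.1.2.le
    have hDj : d * P * t.2.2 ≤ d * P * (p - 1) := Nat.mul_le_mul_left _ hj
    have hk := t.2.1.2
    have hdegt := natDegree_paddedMonomial_le hdeg (t.1 * (P * p) + t.2.1) hj
    omega
  · have hcard : Fintype.card (Fin P × Fin (P + 2 * d + 2) × Fin p) =
        P * p * P + 2 * (d * P * p) + 2 * (P * p) := by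
      simp only [Fintype.card_prod, Fintype.card_fin]
      ring
    have hPp : P ≤ P * p := Nat.le_mul_of_pos_right P hp
    have hDp : d * P * (p - 1) ≤ d * P * p := Nat.mul_le_mul_left _ (Nat.sub_le p 1)
    omega

theorem stepanov_exponent_le {p d P i k j : ℕ} (hp : 0 < p) (hi : i ≤ P)
    (hk : k ≤ P + 2 * d + 1) (hj : j ≤ p - 1) :
    i + P * p * k + d * P * j + d * P * (p - 1) ≤ P * p * P + (4 * d + 3) * (P * p) := by
  have hPk : P * p * k ≤ P * p * (P + 2 * d + 1) := Nat.mul_le_mul_left _ hk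
  have hPp : P ≤ P * p := Nat.le_mul_of_pos_right P hp
  have hD {m : ℕ} (hm : m ≤ p - 1) : d * P * m ≤ d * (P * p) := by
    rw [← mul_assoc]
    exact Nat.mul_le_mul_left _ (hm.trans (Nat.sub_le p 1))
  have hDj := hD hj
  have hDp := hD le_rfl
  linarith

theorem exists_stepanov_polynomial [Fintype K] {p : ℕ} [Fact p.Prime] [CharP K p] {n d : ℕ}
    (hcard : Fintype.card K = p ^ (2 * (n + 1))) (hpd : p.Coprime d)
    (hbig : 2 * d + 2 < p ^ (n + 1)) {H : K[X]} (hH : H ≠ 0) (hdeg : H.natDegree = 2 * (d * p ^ n))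
    (s : K) :
    ∃ G : K[X], G ≠ 0 ∧ G.natDegree ≤ p ^ (n + 1) * p ^ n + (4 * d + 3) * p ^ (n + 1) ∧
      ∀ x h : K, x ≠ 0 → H.eval x = x ^ (d * p ^ n) * h → h ^ p ^ (n + 1) = s - h →
        G.eval x = 0 := by
  have hp : p.Prime := Fact.out
  have hj (t : Fin (p ^ n) × Fin (p ^ n + 2 * d + 2) × Fin p) : (t.2.2 : ℕ) ≤ p - 1 :=
    Nat.le_sub_one_of_lt t.2.2.2
  have hdegs : (C s * X ^ (d * p ^ n) - H).natDegree ≤ 2 * (d * p ^ n) :=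
    (natDegree_sub_le_of_le (natDegree_C_mul_X_pow_le s _) hdeg.le).trans
      (max_le (Nat.le_mul_of_pos_left _ two_pos) le_rfl)
  have hv := linearIndependent_paddedMonomial hpd hp.pos (pow_pos hp.pos n) (p ^ n + 2 * d + 2)
    hH hdeg
  have hw := not_linearIndependent_paddedMonomial hp.pos (by rwa [← pow_succ]) hdegs
  simp only [← pow_succ] at hv hw
  obtain ⟨e, hrel, t₀, ht₀⟩ := Fintype.not_linearIndependent_iff.1 hw
  refine ⟨∑ t, e t ^ p ^ (n + 1) • paddedMonomial (d * p ^ n) (p - 1) H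
    (t.1 + p ^ (n + 1) * t.2.1) t.2.2, fun hG => ?_,
    natDegree_sum_le_of_forall_le _ _ fun t _ => ?_, fun x h hx hHx hh => ?_⟩
  · exact pow_ne_zero _ ht₀ (Fintype.linearIndependent_iff.1 hv _ hG t₀)
  · refine (natDegree_smul_le _ _).trans ((natDegree_paddedMonomial hH hdeg _ (hj t)).trans_le ?_)
    have hexp := stepanov_exponent_le (P := p ^ n) (d := d) hp.pos t.1.2.le
      (Nat.le_of_lt_succ t.2.1.2) (hj t)
    rwa [← pow_succ] at hexp
  · have hinv (y : K) : (y ^ p ^ (n + 1)) ^ p ^ (n + 1) = y := by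
      rw [← pow_mul, ← pow_add, ← two_mul, ← hcard, FiniteField.pow_card]
    have hHx' : (C s * X ^ (d * p ^ n) - H).eval x = x ^ (d * p ^ n) * (s - h) := by
      rw [eval_sub, eval_mul, eval_C, eval_pow, eval_X, hHx]
      ring
    have hrel' := congrArg (eval x) hrel
    simp only [eval_finsetSum, eval_smul, smul_eq_mul, eval_paddedMonomial hHx' _ (hj _),
      eval_zero, mul_left_comm _ (x ^ (d * p ^ n * (p - 1))), ← mul_sum, mul_eq_zero,
      pow_ne_zero _ hx, false_or] at hrel'
    simp only [eval_finsetSum, eval_smul, smul_eq_mul, eval_paddedMonomial hHx _ (hj _),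
      mul_left_comm _ (x ^ (d * p ^ n * (p - 1))), ← mul_sum]
    rw [sum_pow_mul_eq_zero_of_frobenius hinv hh e _ _ _ hrel', mul_zero]

theorem card_trace_eq_le [Fintype K] {p : ℕ} [Fact p.Prime] [Algebra (ZMod p) K] {n d : ℕ}
    (hcard : Fintype.card K = p ^ (2 * (n + 1))) (hd : d ≠ 0) (hpd : p.Coprime d)
    (hbig : 2 * d + 2 < p ^ (n + 1)) {a : K} (ha : a ≠ 0) (b : K) (s : ZMod p) :
    #{x : Kˣ | Algebra.trace (ZMod p) K (a * (x : K) ^ d + b * (x : K)⁻¹ ^ d) = s} ≤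
      p ^ (n + 1) * p ^ n + (4 * d + 3) * p ^ (n + 1) := by
  have hp : p.Prime := Fact.out
  have : CharP K p := charP_of_injective_algebraMap (algebraMap (ZMod p) K).injective p
  have hfinrank : Module.finrank (ZMod p) K = 2 * (n + 1) := by
    have h := Module.card_eq_pow_finrank (K := ZMod p) (V := K)
    rw [hcard, ZMod.card] at h
    exact (Nat.pow_right_injective hp.two_le h).symm
  have hdeg := natDegree_halfTrace (n := n) hp.one_lt hd ha b
  have hH : halfTrace p n d a b ≠ 0 :=
    ne_zero_of_natDegree_gt (n := 0) (hdeg ▸ by have := hp.pos; positivity)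
  obtain ⟨G, hG, hGdeg, hGeval⟩ :=
    exists_stepanov_polynomial hcard hpd hbig hH hdeg (algebraMap (ZMod p) K s)
  rw [← card_map ⟨((↑) : Kˣ → K), Units.val_injective⟩]
  refine (card_le_degree_of_subset_roots fun y hy => ?_).trans hGdeg
  obtain ⟨x, hx, rfl⟩ := mem_map.1 hy
  set z := a * (x : K) ^ d + b * (x : K)⁻¹ ^ d
  refine (mem_roots hG).2 (hGeval _ (∑ i ∈ range (n + 1), z ^ p ^ i) x.ne_zero
    (eval_halfTrace p n d a b hp.pos x.ne_zero) ?_)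
  have htrace : Algebra.trace (ZMod p) K z = s := (mem_filter.1 hx).2
  rw [eq_sub_iff_add_eq', ← htrace, FiniteField.algebraMap_trace_eq_sum_pow, hfinrank,
    Nat.card_eq_fintype_card, ZMod.card, two_mul, sum_range_add _ (n + 1), sum_pow_char_pow]
  simp only [pow_add p (n + 1), pow_mul, pow_right_comm z (p ^ (n + 1))]

end Stepanov

section FiniteFieldSums

/-- Since `ψ` sums to zero, only the deviations of the fibre sizes from `c` contribute, and an upper
bound for the deviations controls their absolute values because their sum is known. -/
theorem norm_sum_addChar_comp_le {ι A : Type*} [Fintype ι] [AddCommGroup A] [Fintype A]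
    {ψ : AddChar A ℂ} (hψ : ψ ≠ 1) (T : ι → A) {c B E : ℝ} (hB : 0 ≤ B)
    (hfiber : ∀ s, (#{i | T i = s} : ℝ) ≤ c + B) (hE : Fintype.card A * c ≤ Fintype.card ι + E) :
    ‖∑ i, ψ (T i)‖ ≤ 2 * Fintype.card A * B + E := by
  have hsum : ∑ i, ψ (T i) = ∑ s, ((#{i | T i = s} - c : ℝ) : ℂ) * ψ s := by
    simp only [Complex.ofReal_sub, Complex.ofReal_natCast, sub_mul, sum_sub_distrib, ← mul_sum,
      AddChar.sum_eq_zero_of_ne_one hψ, mul_zero, sub_zero]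
    rw [← sum_fiberwise univ T]
    refine sum_congr rfl fun s _ => ?_
    rw [sum_congr rfl fun i hi => congrArg ψ (mem_filter.1 hi).2, sum_const, nsmul_eq_mul]
  have hcard : ∑ s, (#{i | T i = s} : ℝ) = Fintype.card ι := by
    rw [← Nat.cast_sum, ← card_univ, card_eq_sum_card_fiberwise fun i _ => mem_univ (T i)]
  calc ‖∑ i, ψ (T i)‖ ≤ ∑ s, |(#{i | T i = s} : ℝ) - c| := by
        rw [hsum]
        refine (norm_sum_le _ _).trans_eq (sum_congr rfl fun s _ => ?_)
        rw [norm_mul, AddChar.norm_apply, mul_one, Complex.norm_real, Real.norm_eq_abs]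
    _ ≤ ∑ s, (2 * B - (#{i | T i = s} - c)) := by
        refine sum_le_sum fun s _ => ?_
        have := hfiber s
        rw [abs_le]
        constructor <;> linarith
    _ = 2 * Fintype.card A * B + (Fintype.card A * c - Fintype.card ι) := by
        rw [sum_sub_distrib, sum_sub_distrib, hcard, sum_const, sum_const, card_univ, nsmul_eq_mul,
          nsmul_eq_mul]
        ring
    _ ≤ 2 * Fintype.card A * B + E := by linarith

variable {p : ℕ} [Fact p.Prime] {K : Type*} [Field K] [Fintype K] [Algebra (ZMod p) K]

theorem norm_sum_addChar_trace_le {n d : ℕ} (hcard : Fintype.card K = p ^ (2 * (n + 1)))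
    (hd : d ≠ 0) (hpd : p.Coprime d) (hbig : 2 * d + 2 < p ^ (n + 1)) {a : K} (ha : a ≠ 0) (b : K)
    {ψ : AddChar (ZMod p) ℂ} (hψ : ψ ≠ 1) :
    ‖∑ x : Kˣ, ψ (Algebra.trace (ZMod p) K (a * (x : K) ^ d + b * (x : K)⁻¹ ^ d))‖ ≤
      (2 * p * (4 * d + 3) + 1) * (p : ℝ) ^ (n + 1) := by
  have hp : p.Prime := Fact.out
  have hmean : (Fintype.card (ZMod p) : ℝ) * (p ^ (n + 1) * p ^ n) ≤ Fintype.card Kˣ + 1 := by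
    rw [Fintype.card_units, hcard, ZMod.card, ← Nat.cast_add_one,
      Nat.sub_add_cancel (Nat.one_le_pow _ _ hp.pos), Nat.cast_pow]
    exact le_of_eq (by ring)
  have hone : (1 : ℝ) ≤ p ^ (n + 1) := one_le_pow₀ (by exact_mod_cast hp.one_lt.le)
  calc _ ≤ 2 * Fintype.card (ZMod p) * ((4 * d + 3) * (p : ℝ) ^ (n + 1)) + 1 :=
        norm_sum_addChar_comp_le hψ _ (by positivity)
          (fun s => by exact_mod_cast card_trace_eq_le hcard hd hpd hbig ha b s) hmean
    _ ≤ (2 * p * (4 * d + 3) + 1) * (p : ℝ) ^ (n + 1) := by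
        rw [ZMod.card]
        linarith

/-- `(p - 1)`-st powers have norm `1`, so averaging over the substitutions `x ↦ x y^(p-1)` removes
the multiplicative character at the price of the exponent `p - 1`. -/
theorem card_units_mul_sum_mulChar_norm_mul_addChar_trace (a b : K) (χ : MulChar (ZMod p) ℂ)
    (ψ : AddChar (ZMod p) ℂ) :
    (Fintype.card Kˣ : ℂ) * ∑ x : Kˣ, χ (Algebra.norm (ZMod p) (x : K)) *
        ψ (Algebra.trace (ZMod p) K (a * x + b * (x : K)⁻¹)) =
      ∑ g : Kˣ, χ (Algebra.norm (ZMod p) (g : K)) * ∑ x : Kˣ, ψ (Algebra.trace (ZMod p) K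
        ((a * g) * (x : K) ^ (p - 1) + (b * (g : K)⁻¹) * (x : K)⁻¹ ^ (p - 1))) := by
  set F : Kˣ → ℂ := fun x => χ (Algebra.norm (ZMod p) (x : K)) *
    ψ (Algebra.trace (ZMod p) K (a * x + b * (x : K)⁻¹)) with hF
  have hshift (x : Kˣ) : ∑ g, F (g * x ^ (p - 1)) = ∑ g, F g :=
    Equiv.sum_comp (Equiv.mulRight (x ^ (p - 1))) F
  have hnorm (x : Kˣ) : Algebra.norm (ZMod p) (x : K) ^ (p - 1) = 1 :=
    ZMod.pow_card_sub_one_eq_one (Algebra.norm_ne_zero_iff.2 x.ne_zero)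
  calc (Fintype.card Kˣ : ℂ) * ∑ x, F x = ∑ x : Kˣ, ∑ g, F (g * x ^ (p - 1)) := by
        simp only [hshift, sum_const, card_univ, nsmul_eq_mul]
    _ = _ := by
        rw [sum_comm]
        refine sum_congr rfl fun g _ => ?_
        rw [mul_sum]
        refine sum_congr rfl fun x _ => ?_
        simp only [hF, Units.val_mul, Units.val_pow_eq_pow_val, map_mul (Algebra.norm _),
          map_pow (Algebra.norm _), hnorm, mul_one, mul_inv, inv_pow, mul_assoc]

theorem norm_sum_mulChar_norm_mul_addChar_trace_le {n : ℕ}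
    (hcard : Fintype.card K = p ^ (2 * (n + 1))) (hn : 2 ≤ n) {a : K} (ha : a ≠ 0) (b : K)
    (χ : MulChar (ZMod p) ℂ) {ψ : AddChar (ZMod p) ℂ} (hψ : ψ ≠ 1) :
    ‖∑ x : Kˣ, χ (Algebra.norm (ZMod p) (x : K)) *
        ψ (Algebra.trace (ZMod p) K (a * x + b * (x : K)⁻¹))‖ ≤
      (8 * p ^ 2 + 1) * (p : ℝ) ^ (n + 1) := by
  have hp : p.Prime := Fact.out
  have hp2 := hp.two_le
  set B : ℝ := (8 * p ^ 2 + 1) * (p : ℝ) ^ (n + 1) with hB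
  have hbig : 2 * (p - 1) + 2 < p ^ (n + 1) := calc
    2 * (p - 1) + 2 = 2 * p := by omega
    _ < p ^ 2 * p := by gcongr; nlinarith
    _ = p ^ 3 := rfl
    _ ≤ p ^ (n + 1) := Nat.pow_le_pow_right hp.pos (by omega)
  have hinner (g : Kˣ) : ‖∑ x : Kˣ, ψ (Algebra.trace (ZMod p) K
      ((a * g) * (x : K) ^ (p - 1) + (b * (g : K)⁻¹) * (x : K)⁻¹ ^ (p - 1)))‖ ≤ B := by
    have hpd : p.Coprime (p - 1) := (Nat.coprime_self_sub_right hp.one_lt.le).2 (by simp)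
    refine (norm_sum_addChar_trace_le hcard (by omega) hpd hbig (mul_ne_zero ha g.ne_zero) _
      hψ).trans ?_
    have : (1 : ℝ) ≤ p := by exact_mod_cast hp.one_lt.le
    rw [Nat.cast_pred hp.pos, hB]
    gcongr ?_ * _
    nlinarith
  have hmul : Fintype.card Kˣ * ‖∑ x : Kˣ, χ (Algebra.norm (ZMod p) (x : K)) *
      ψ (Algebra.trace (ZMod p) K (a * x + b * (x : K)⁻¹))‖ ≤ Fintype.card Kˣ * B := by
    rw [← Complex.norm_natCast, ← norm_mul, card_units_mul_sum_mulChar_norm_mul_addChar_trace,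
      Complex.norm_natCast, ← nsmul_eq_mul, ← card_univ]
    refine norm_sum_le_of_le _ (fun g _ => ?_) |>.trans_eq (sum_const B)
    rw [norm_mul]
    exact (mul_le_of_le_one_left (norm_nonneg _) (DirichletCharacter.norm_le_one χ _)).trans
      (hinner g)
  exact le_of_mul_le_mul_left hmul (by exact_mod_cast Fintype.card_pos)

end FiniteFieldSums

/-! ### L-functions of completely multiplicative functions on monic polynomials -/

section MonicLFunction

variable {F : Type*} [Field F]

theorem pow_dvd_iff_le_count_normalizedFactors {π g : F[X]} (hπ : π.Monic) (hirr : Irreducible π)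
    (hg : g ≠ 0) (j : ℕ) :
    π ^ j ∣ g ↔ j ≤ (UniqueFactorizationMonoid.normalizedFactors g).count π := by
  rw [pow_dvd_iff_le_emultiplicity,
    UniqueFactorizationMonoid.emultiplicity_eq_count_normalizedFactors hirr hg,
    hπ.normalize_eq_self, Nat.cast_le]

theorem card_filter_pow_dvd {π g : F[X]} (hπ : π.Monic) (hirr : Irreducible π) (hg : g ≠ 0) :
    #{j ∈ Ioc 0 g.natDegree | π ^ j ∣ g} =
      (UniqueFactorizationMonoid.normalizedFactors g).count π := by
  have hle : (UniqueFactorizationMonoid.normalizedFactors g).count π ≤ g.natDegree := by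
    have hdvd := (pow_dvd_iff_le_count_normalizedFactors hπ hirr hg _).2 le_rfl
    have hdeg := natDegree_le_of_dvd hdvd hg
    rw [natDegree_pow] at hdeg
    exact (Nat.le_mul_of_pos_right _ hirr.natDegree_pos).trans hdeg
  simp only [pow_dvd_iff_le_count_normalizedFactors hπ hirr hg]
  rw [show ({j ∈ Ioc 0 g.natDegree | j ≤ _} : Finset ℕ) =
    Ioc 0 ((UniqueFactorizationMonoid.normalizedFactors g).count π) by ext j; simp; omega]
  simp

/-- Complete multiplicativity of a function on monic polynomials (its values at other polynomials
are irrelevant). -/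
structure IsMonicMultiplicative {R : Type*} [CommRing R] (Λ : F[X] → R) : Prop where
  map_one : Λ 1 = 1
  map_mul : ∀ {g h : F[X]}, g.Monic → h.Monic → Λ (g * h) = Λ g * Λ h

theorem IsMonicMultiplicative.map_pow {R : Type*} [CommRing R] {Λ : F[X] → R}
    (hΛ : IsMonicMultiplicative Λ) {g : F[X]} (hg : g.Monic) (j : ℕ) : Λ (g ^ j) = Λ g ^ j := by
  induction j with
  | zero => rw [pow_zero, pow_zero, hΛ.map_one]
  | succ j ih => rw [pow_succ, hΛ.map_mul (hg.pow j) hg, ih, pow_succ]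

variable [Finite F]

theorem finite_monic_natDegree_eq (F : Type*) [Field F] [Finite F] (N : ℕ) :
    {g : F[X] | g.Monic ∧ g.natDegree = N}.Finite := by
  have : Finite (degreeLT F (N + 1)) := Finite.of_equiv _ (degreeLTEquiv F (N + 1)).symm.toEquiv
  refine Set.Finite.subset (Set.toFinite (degreeLT F (N + 1) : Set F[X])) fun g hg => ?_
  refine mem_degreeLT.2 (degree_le_natDegree.trans_lt ?_)
  exact_mod_cast hg.2.trans_lt N.lt_succ_self

/-- The monic polynomials of degree `N` over a finite field. -/
noncomputable def monics (F : Type*) [Field F] [Finite F] (N : ℕ) : Finset F[X] :=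
  (finite_monic_natDegree_eq F N).toFinset

theorem mem_monics {N : ℕ} {g : F[X]} : g ∈ monics F N ↔ g.Monic ∧ g.natDegree = N := by
  simp [monics]

/-- The monic irreducible polynomials of degree `N` over a finite field. -/
noncomputable def monicIrreducibles (F : Type*) [Field F] [Finite F] (N : ℕ) : Finset F[X] :=
  {g ∈ monics F N | Irreducible g}

theorem mem_monicIrreducibles {N : ℕ} {g : F[X]} :
    g ∈ monicIrreducibles F N ↔ (g.Monic ∧ g.natDegree = N) ∧ Irreducible g := by
  rw [monicIrreducibles, mem_filter, mem_monics]

theorem natDegree_eq_sum_count_normalizedFactors {g : F[X]} (hg : g.Monic) :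
    g.natDegree = ∑ e ∈ Ioc 0 g.natDegree, ∑ π ∈ monicIrreducibles F e,
      (UniqueFactorizationMonoid.normalizedFactors g).count π * e := by
  set s := UniqueFactorizationMonoid.normalizedFactors g
  have hirr : ∀ π ∈ s, Irreducible π := UniqueFactorizationMonoid.irreducible_of_normalized_factor
  have hmonic : ∀ π ∈ s, π.Monic := fun π hπ =>
    UniqueFactorizationMonoid.normalize_normalized_factor π hπ ▸ monic_normalize (hirr π hπ).ne_zero
  have hdegree : ∀ π ∈ s.toFinset, π.natDegree ∈ Ioc 0 g.natDegree := fun π hπ => by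
    rw [Multiset.mem_toFinset] at hπ
    exact mem_Ioc.2 ⟨(hirr π hπ).natDegree_pos, natDegree_le_of_dvd
      (UniqueFactorizationMonoid.dvd_of_mem_normalizedFactors hπ) hg.ne_zero⟩
  have hprod : s.prod = g := by
    rw [UniqueFactorizationMonoid.prod_normalizedFactors_eq hg.ne_zero, hg.normalize_eq_self]
  calc g.natDegree = ∑ π ∈ s.toFinset, s.count π * π.natDegree := by
        conv_lhs => rw [← hprod, natDegree_multiset_prod_of_monic _ hmonic,
          sum_multiset_map_count]
        simp only [smul_eq_mul]
    _ = ∑ e ∈ Ioc 0 g.natDegree, ∑ π ∈ s.toFinset with π.natDegree = e,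
          s.count π * π.natDegree := (sum_fiberwise_of_maps_to hdegree _).symm
    _ = _ := by
        refine sum_congr rfl fun e _ => ?_
        rw [sum_congr rfl fun π hπ => by rw [(mem_filter.1 hπ).2]]
        refine sum_subset (fun π hπ => ?_) fun π hπ hnot => ?_
        · obtain ⟨hmem, hdeg⟩ := mem_filter.1 hπ
          rw [Multiset.mem_toFinset] at hmem
          exact mem_monicIrreducibles.2 ⟨⟨hmonic π hmem, hdeg⟩, hirr π hmem⟩
        · have : π ∉ s := fun hmem => hnot <| mem_filter.2
            ⟨Multiset.mem_toFinset.2 hmem, (mem_monicIrreducibles.1 hπ).1.2⟩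
          rw [Multiset.count_eq_zero.2 this, zero_mul]

/-- The coefficient of `T^N` in the L-function `∑_g Λ(g) T^(deg g)`. -/
noncomputable def monicSum {R : Type*} [CommRing R] (Λ : F[X] → R) (N : ℕ) : R :=
  ∑ g ∈ monics F N, Λ g

/-- The coefficient of `T^r` in the logarithmic derivative `T L'(T) / L(T)` of the L-function of
`Λ`: the von Mangoldt weighted sum over prime powers `π^j` of degree `r`. -/
noncomputable def primePowerSum {R : Type*} [CommRing R] (Λ : F[X] → R) (r : ℕ) : R :=
  ∑ ij ∈ r.divisorsAntidiagonal, ∑ π ∈ monicIrreducibles F ij.1, (ij.1 : R) * Λ π ^ ij.2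

variable {R : Type*} [CommRing R] {Λ : F[X] → R}

theorem monicSum_zero (hΛ : IsMonicMultiplicative Λ) : monicSum Λ 0 = 1 := by
  have hmonics : monics F 0 = {1} := by
    ext g
    rw [mem_monics, mem_singleton]
    refine ⟨fun h => h.1.natDegree_eq_zero.1 h.2, ?_⟩
    rintro rfl
    exact ⟨monic_one, natDegree_one⟩
  rw [monicSum, hmonics, sum_singleton, hΛ.map_one]

theorem sum_monics_filter_dvd (hΛ : IsMonicMultiplicative Λ) {h : F[X]} (hh : h.Monic) {N : ℕ}
    (hN : h.natDegree ≤ N) :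
    ∑ g ∈ monics F N with h ∣ g, Λ g = Λ h * monicSum Λ (N - h.natDegree) := by
  rw [monicSum, mul_sum]
  symm
  refine sum_bij (fun f _ => h * f) (fun f hf => ?_)
    (fun f _ f' _ heq => mul_left_cancel₀ hh.ne_zero heq) (fun g hg => ?_) fun f hf => ?_
  · obtain ⟨hmonic, hdeg⟩ := mem_monics.1 hf
    refine mem_filter.2 ⟨mem_monics.2 ⟨hh.mul hmonic, ?_⟩, dvd_mul_right _ _⟩
    rw [hh.natDegree_mul hmonic, hdeg, Nat.add_sub_cancel' hN]
  · obtain ⟨hg', f, rfl⟩ := mem_filter.1 hg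
    obtain ⟨hmonic, hdeg⟩ := mem_monics.1 hg'
    have hf := hh.of_mul_monic_left hmonic
    refine ⟨f, mem_monics.2 ⟨hf, ?_⟩, rfl⟩
    rw [← hdeg, hh.natDegree_mul hf, Nat.add_sub_cancel_left]
  · rw [hΛ.map_mul hh (mem_monics.1 hf).1]

theorem natCast_mul_eq_sum_pow_dvd {g : F[X]} (hg : g.Monic) (c : R) :
    (g.natDegree : R) * c = ∑ e ∈ Ioc 0 g.natDegree, ∑ j ∈ Ioc 0 g.natDegree,
      ∑ π ∈ monicIrreducibles F e, if π ^ j ∣ g then (e : R) * c else 0 := by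
  conv_lhs => rw [natDegree_eq_sum_count_normalizedFactors hg, Nat.cast_sum, sum_mul]
  refine sum_congr rfl fun e _ => ?_
  rw [sum_comm, Nat.cast_sum, sum_mul]
  refine sum_congr rfl fun π hπ => ?_
  obtain ⟨⟨hmonic, -⟩, hirr⟩ := mem_monicIrreducibles.1 hπ
  rw [← card_filter_pow_dvd hmonic hirr hg.ne_zero, ← sum_filter, sum_const, nsmul_eq_mul,
    Nat.cast_mul, mul_assoc]

theorem sum_monics_filter_pow_dvd (hΛ : IsMonicMultiplicative Λ) {π : F[X]} (hπ : π.Monic)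
    (j N : ℕ) : ∑ g ∈ monics F N with π ^ j ∣ g, Λ g =
      if π.natDegree * j ≤ N then Λ π ^ j * monicSum Λ (N - π.natDegree * j) else 0 := by
  have hdeg : (π ^ j).natDegree = π.natDegree * j := by rw [natDegree_pow, mul_comm]
  split_ifs with hN
  · rw [sum_monics_filter_dvd hΛ (hπ.pow j) (hdeg.trans_le hN), hΛ.map_pow hπ, hdeg]
  · rw [filter_false_of_mem, sum_empty]
    intro g hg hdvd
    obtain ⟨hmonic, hgN⟩ := mem_monics.1 hg
    exact hN (hdeg ▸ hgN ▸ natDegree_le_of_dvd hdvd hmonic.ne_zero)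

theorem sum_filter_mul_le_eq_sum_divisorsAntidiagonal {M : Type*} [AddCommMonoid M] (N : ℕ)
    (f : ℕ × ℕ → M) : ∑ ij ∈ Ioc 0 N ×ˢ Ioc 0 N with ij.1 * ij.2 ≤ N, f ij =
      ∑ r ∈ Ioc 0 N, ∑ ij ∈ r.divisorsAntidiagonal, f ij := by
  rw [← sum_fiberwise_of_maps_to (g := fun ij : ℕ × ℕ => ij.1 * ij.2) (t := Ioc 0 N)]
  · refine sum_congr rfl fun r hr => ?_
    obtain ⟨hr0, hrN⟩ := mem_Ioc.1 hr
    rw [Nat.divisorsAntidiagonal_eq_prod_filter_of_le hr0.ne' hrN, filter_filter]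
    exact sum_congr (filter_congr fun ij _ => ⟨And.right, fun h => ⟨h.trans_le hrN, h⟩⟩)
      fun _ _ => rfl
  · intro ij hij
    simp only [mem_filter, mem_product, mem_Ioc] at hij ⊢
    exact ⟨Nat.mul_pos hij.1.1.1 hij.1.2.1, hij.2⟩

/-- Newton's identities for the L-function, by counting the prime power divisors of each monic
polynomial `g` with weight `deg π`, which gives `deg g` in total. -/
theorem natCast_mul_monicSum (hΛ : IsMonicMultiplicative Λ) (N : ℕ) :
    (N : R) * monicSum Λ N = ∑ r ∈ Ioc 0 N, primePowerSum Λ r * monicSum Λ (N - r) := by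
  calc (N : R) * monicSum Λ N
      = ∑ ij ∈ Ioc 0 N ×ˢ Ioc 0 N, ∑ π ∈ monicIrreducibles F ij.1, if ij.1 * ij.2 ≤ N then
          (ij.1 : R) * Λ π ^ ij.2 * monicSum Λ (N - ij.1 * ij.2) else 0 := by
        have hweight : ∀ g ∈ monics F N, (N : R) * Λ g = ∑ e ∈ Ioc 0 N, ∑ j ∈ Ioc 0 N,
            ∑ π ∈ monicIrreducibles F e, if π ^ j ∣ g then (e : R) * Λ g else 0 := by
          intro g hg
          obtain ⟨hmonic, rfl⟩ := mem_monics.1 hg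
          exact natCast_mul_eq_sum_pow_dvd hmonic _
        rw [monicSum, mul_sum, sum_congr rfl hweight, sum_product, sum_comm]
        refine sum_congr rfl fun e _ => ?_
        rw [sum_comm]
        refine sum_congr rfl fun j _ => ?_
        rw [sum_comm]
        refine sum_congr rfl fun π hπ => ?_
        obtain ⟨⟨hmonic, rfl⟩, -⟩ := mem_monicIrreducibles.1 hπ
        rw [← sum_filter, ← mul_sum, sum_monics_filter_pow_dvd hΛ hmonic, mul_ite, mul_zero,
          mul_assoc]
    _ = ∑ ij ∈ Ioc 0 N ×ˢ Ioc 0 N with ij.1 * ij.2 ≤ N, (∑ π ∈ monicIrreducibles F ij.1,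
          (ij.1 : R) * Λ π ^ ij.2) * monicSum Λ (N - ij.1 * ij.2) := by
        rw [sum_filter]
        refine sum_congr rfl fun ij _ => ?_
        split_ifs <;> simp [sum_mul]
    _ = _ := by
        rw [sum_filter_mul_le_eq_sum_divisorsAntidiagonal]
        refine sum_congr rfl fun r _ => ?_
        rw [primePowerSum, sum_mul]
        exact sum_congr rfl fun ij hij => by rw [(Nat.mem_divisorsAntidiagonal.1 hij).1]

end MonicLFunction

/-! ### Kloosterman sums over finite fields -/

section Minpoly

open IntermediateField

variable {F K : Type*} [Field F] [Field K] [Algebra F K]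

theorem adjoin_simple_inv (x : K) : F⟮x⁻¹⟯ = F⟮x⟯ := by
  refine le_antisymm (adjoin_simple_le_iff.2 (inv_mem (mem_adjoin_simple_self F x)))
    (adjoin_simple_le_iff.2 ?_)
  simpa using inv_mem (mem_adjoin_simple_self F x⁻¹)

theorem minpoly_inv {x : K} (hx : x ≠ 0) (hint : IsIntegral F x) :
    minpoly F x⁻¹ = C ((minpoly F x).coeff 0)⁻¹ * (minpoly F x).reverse := by
  have hdeg : (minpoly F x⁻¹).natDegree = (minpoly F x).natDegree := by
    rw [← adjoin.finrank hint, ← adjoin.finrank hint.inv, adjoin_simple_inv]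
  have hcoeff : (minpoly F x).coeff 0 ≠ 0 := minpoly.coeff_zero_ne_zero hint hx
  have htrailing : (minpoly F x).natTrailingDegree = 0 :=
    natTrailingDegree_eq_zero.2 (Or.inr hcoeff)
  have hmonic : (C ((minpoly F x).coeff 0)⁻¹ * (minpoly F x).reverse).Monic := by
    rw [Monic, leadingCoeff_mul, leadingCoeff_C, reverse_leadingCoeff, trailingCoeff, htrailing,
      inv_mul_cancel₀ hcoeff]
  refine (minpoly.unique_of_degree_le_degree_minpoly F _ hmonic ?_ ?_).symm
  · let _ := invertibleOfNonzero hx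
    have hroot := (eval₂_reverse_eq_zero_iff (algebraMap F K) x (minpoly F x)).2
      (minpoly.aeval F x)
    rw [invOf_eq_inv] at hroot
    rw [map_mul, aeval_def x⁻¹ (reverse _), hroot, mul_zero]
  · rw [degree_eq_natDegree hmonic.ne_zero, degree_eq_natDegree (minpoly.ne_zero hint.inv), hdeg,
      natDegree_C_mul (inv_ne_zero hcoeff), reverse_natDegree, htrailing, Nat.sub_zero]

theorem nextCoeff_minpoly_inv {x : K} (hx : x ≠ 0) (hint : IsIntegral F x) :
    (minpoly F x⁻¹).nextCoeff = (minpoly F x).coeff 1 / (minpoly F x).coeff 0 := by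
  have hx' : x⁻¹ ≠ 0 := inv_ne_zero hx
  have hcoeff := minpoly.coeff_zero_ne_zero hint.inv hx'
  have hswap := minpoly_inv hx' hint.inv
  rw [inv_inv] at hswap
  rw [hswap, coeff_C_mul, coeff_C_mul, coeff_one_reverse, coeff_zero_reverse,
    (minpoly.monic hint.inv).leadingCoeff, mul_one, div_eq_mul_inv, inv_inv,
    mul_comm _ (nextCoeff _), mul_assoc, inv_mul_cancel₀ hcoeff, mul_one]

theorem norm_eq_pow_coeff_zero_minpoly [FiniteDimensional F K] (x : K) :
    Algebra.norm F x = ((-1) ^ (minpoly F x).natDegree * (minpoly F x).coeff 0) ^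
      Module.finrank F⟮x⟯ K := by
  have hint : IsIntegral F x := .of_finite F x
  rw [Algebra.norm_eq_norm_adjoin]
  congr 1
  simpa [minpoly_gen F x] using
    Algebra.PowerBasis.norm_gen_eq_coeff_zero_minpoly (adjoin.powerBasis hint)

theorem natDegree_minpoly_mul_finrank [FiniteDimensional F K] (x : K) :
    (minpoly F x).natDegree * Module.finrank F⟮x⟯ K = Module.finrank F K := by
  rw [← adjoin.finrank (.of_finite F x), Module.finrank_mul_finrank]

variable [Finite F] [Fintype K]

theorem card_minpoly_eq {π : F[X]} (hmonic : π.Monic) (hirr : Irreducible π)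
    (hdvd : π.natDegree ∣ Module.finrank F K) : #{x : K | minpoly F x = π} = π.natDegree := by
  have hdvd' := hirr.natDegree_dvd_iff_dvd_X_pow_card_pow_sub_X.1 hdvd
  rw [← Module.natCard_eq_pow_finrank] at hdvd'
  have hsplits : (π.map (algebraMap F K)).Splits := by
    have hmap := Polynomial.map_dvd (algebraMap F K) hdvd'
    rw [Polynomial.map_sub, Polynomial.map_pow, map_X] at hmap
    exact Splits.of_dvd splits_X_pow_nat_card_sub_X
      (FiniteField.X_pow_card_sub_X_ne_zero K Finite.one_lt_card) hmap
  have hroots : ({x : K | minpoly F x = π} : Finset K) =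
      (π.map (algebraMap F K)).roots.toFinset := by
    ext x
    rw [mem_filter_univ, Multiset.mem_toFinset, mem_roots (map_monic_ne_zero hmonic), IsRoot.def,
      eval_map_algebraMap]
    exact ⟨fun h => h ▸ minpoly.aeval F x,
      fun h => (minpoly.eq_of_irreducible_of_monic hirr h hmonic).symm⟩
  have hsep : π.Separable := PerfectField.separable_of_irreducible hirr
  rw [hroots, Multiset.toFinset_card_of_nodup (nodup_roots hsep.map),
    ← hsplits.natDegree_eq_card_roots, natDegree_map]

/-- Group the elements of `K` by their minimal polynomials. -/
theorem sum_minpoly_pow_finrank {R : Type*} [CommRing R] (Λ : F[X] → R) :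
    ∑ x : K, Λ (minpoly F x) ^ Module.finrank F⟮x⟯ K = primePowerSum Λ (Module.finrank F K) := by
  have hmaps : ∀ x ∈ (univ : Finset K), ((minpoly F x).natDegree, Module.finrank F⟮x⟯ K) ∈
      (Module.finrank F K).divisorsAntidiagonal := fun x _ =>
    Nat.mem_divisorsAntidiagonal.2 ⟨natDegree_minpoly_mul_finrank x, Module.finrank_pos.ne'⟩
  rw [primePowerSum, ← sum_fiberwise_of_maps_to hmaps]
  refine sum_congr rfl fun ⟨e, j⟩ hej => ?_
  obtain ⟨hmul, -⟩ := Nat.mem_divisorsAntidiagonal.1 hej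
  have hmaps' : ∀ x ∈ ({x : K | ((minpoly F x).natDegree, Module.finrank F⟮x⟯ K) = (e, j)} :
      Finset K), minpoly F x ∈ monicIrreducibles F e := fun x hx => by
    have hint : IsIntegral F x := .of_finite F x
    exact mem_monicIrreducibles.2
      ⟨⟨minpoly.monic hint, (Prod.ext_iff.1 (mem_filter.1 hx).2).1⟩, minpoly.irreducible hint⟩
  rw [← sum_fiberwise_of_maps_to hmaps']
  refine sum_congr rfl fun π hπ => ?_
  obtain ⟨⟨hmonic, rfl⟩, hirr⟩ := mem_monicIrreducibles.1 hπ
  have hfinrank : ∀ x : K, minpoly F x = π → Module.finrank F⟮x⟯ K = j := by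
    rintro x rfl
    exact Nat.eq_of_mul_eq_mul_left hirr.natDegree_pos
      ((natDegree_minpoly_mul_finrank x).trans hmul.symm)
  have hfiber : (univ.filter fun x : K => ((minpoly F x).natDegree, Module.finrank F⟮x⟯ K) =
      (π.natDegree, j)).filter (fun x => minpoly F x = π) =
        univ.filter fun x : K => minpoly F x = π := by
    rw [filter_filter]
    exact filter_congr fun x _ => and_iff_right_of_imp fun h =>
      Prod.ext (congrArg natDegree h) (hfinrank x h)
  rw [hfiber, sum_congr rfl fun x hx => by
      rw [hfinrank x (mem_filter.1 hx).2, (mem_filter.1 hx).2],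
    sum_const, card_minpoly_eq hmonic hirr ⟨j, hmul.symm⟩, nsmul_eq_mul]

end Minpoly

theorem degree_C_mul_X_pow_pred_lt {R : Type*} [Semiring R] {g : R[X]} (hg : 0 < g.natDegree)
    (u : R) : (C u * X ^ (g.natDegree - 1)).degree < g.degree := by
  rw [degree_eq_natDegree (ne_zero_of_natDegree_gt hg)]
  refine (degree_C_mul_X_pow_le _ _).trans_lt ?_
  exact_mod_cast (by omega : g.natDegree - 1 < g.natDegree)

section KloostermanWeight

open IntermediateField

variable {F : Type*} [Field F] (χ : MulChar F ℂ) (ψ : AddChar F ℂ) (a b : F)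

/-- The function on monic polynomials sending `∏ᵢ (X - xᵢ)` to
`χ (∏ᵢ xᵢ) * ψ (a * ∑ᵢ xᵢ + b * ∑ᵢ xᵢ⁻¹)`; its L-function encodes the Kloosterman sums of
`(χ, ψ, a, b)` over the extensions of `F`. At multiples of `X` the factor `χ 0` makes it vanish. -/
noncomputable def kloostermanWeight (g : F[X]) : ℂ :=
  χ ((-1) ^ g.natDegree * g.coeff 0) * ψ (-(a * g.nextCoeff) - b * (g.coeff 1 / g.coeff 0))

theorem isMonicMultiplicative_kloostermanWeight :
    IsMonicMultiplicative (kloostermanWeight χ ψ a b) where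
  map_one := by simp [kloostermanWeight, nextCoeff, coeff_one]
  map_mul {g h} hg hh := by
    by_cases hzero : g.coeff 0 = 0 ∨ h.coeff 0 = 0
    · rcases hzero with h0 | h0 <;> simp [kloostermanWeight, h0, mul_coeff_zero, MulChar.map_zero]
    obtain ⟨hg0, hh0⟩ := not_or.1 hzero
    have hadd : -(a * (g * h).nextCoeff) - b * ((g * h).coeff 1 / (g * h).coeff 0) =
        (-(a * g.nextCoeff) - b * (g.coeff 1 / g.coeff 0)) +
        (-(a * h.nextCoeff) - b * (h.coeff 1 / h.coeff 0)) := by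
      rw [hg.nextCoeff_mul hh, mul_coeff_zero, mul_coeff_one]
      field_simp
      ring
    have hmul : (-1) ^ (g * h).natDegree * (g * h).coeff 0 =
        ((-1) ^ g.natDegree * g.coeff 0) * ((-1) ^ h.natDegree * h.coeff 0) := by
      rw [hg.natDegree_mul hh, mul_coeff_zero, pow_add]
      ring
    rw [kloostermanWeight, hadd, hmul, map_mul, AddChar.map_add_eq_mul, mul_mul_mul_comm]
    rfl

theorem kloostermanWeight_minpoly_pow_finrank {K : Type*} [Field K] [Algebra F K]
    [FiniteDimensional F K] (x : K) :
    kloostermanWeight χ ψ a b (minpoly F x) ^ Module.finrank F⟮x⟯ K =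
      χ (Algebra.norm F x) *
        ψ (Algebra.trace F K (algebraMap F K a * x + algebraMap F K b * x⁻¹)) := by
  rcases eq_or_ne x 0 with rfl | hx
  · have hfinrank : Module.finrank F⟮(0 : K)⟯ K ≠ 0 := Module.finrank_pos.ne'
    simp [kloostermanWeight, hfinrank, MulChar.map_zero]
  have htrace : Algebra.trace F K (algebraMap F K a * x + algebraMap F K b * x⁻¹) =
      Module.finrank F⟮x⟯ K • (-(a * (minpoly F x).nextCoeff) -
        b * ((minpoly F x).coeff 1 / (minpoly F x).coeff 0)) := by
    rw [← Algebra.smul_def, ← Algebra.smul_def, map_add, map_smul, map_smul,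
      trace_eq_finrank_mul_minpoly_nextCoeff, trace_eq_finrank_mul_minpoly_nextCoeff,
      adjoin_simple_inv, nextCoeff_minpoly_inv hx (.of_finite F x)]
    simp only [smul_eq_mul, nsmul_eq_mul]
    ring
  rw [htrace, AddChar.map_nsmul_eq_pow, norm_eq_pow_coeff_zero_minpoly, map_pow, ← mul_pow]
  rfl

theorem sum_mulChar_norm_mul_addChar_trace [Finite F] {K : Type*} [Field K] [Finite K]
    [Fintype Kˣ] [Algebra F K] :
    ∑ x : Kˣ, χ (Algebra.norm F (x : K)) *
        ψ (Algebra.trace F K (algebraMap F K a * x + algebraMap F K b * (x : K)⁻¹)) =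
      primePowerSum (kloostermanWeight χ ψ a b) (Module.finrank F K) := by
  let _ := Fintype.ofFinite K
  rw [← sum_minpoly_pow_finrank (K := K)]
  simp only [kloostermanWeight_minpoly_pow_finrank]
  refine sum_of_injOn Units.val Units.val_injective.injOn (fun _ _ => mem_coe.2 (mem_univ _)) ?_
    fun _ _ => rfl
  intro x _ hx
  have hzero : x = 0 := by
    by_contra h
    exact hx ⟨Units.mk0 x h, mem_coe.2 (mem_univ _), rfl⟩
  rw [hzero, Algebra.norm_zero, MulChar.map_zero, zero_mul]

variable {ψ a}

theorem kloostermanWeight_add_C_mul_X_pow {g : F[X]} (hdeg : 3 ≤ g.natDegree)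
    (u : F) : kloostermanWeight χ ψ a b (g + C u * X ^ (g.natDegree - 1)) =
      ψ (-(a * u)) * kloostermanWeight χ ψ a b g := by
  have hnat := natDegree_add_eq_left_of_degree_lt
    (degree_C_mul_X_pow_pred_lt (by omega : 0 < g.natDegree) u)
  have hzero : (g + C u * X ^ (g.natDegree - 1)).coeff 0 = g.coeff 0 := by
    rw [coeff_add, coeff_C_mul_X_pow, if_neg (by omega), add_zero]
  have hone : (g + C u * X ^ (g.natDegree - 1)).coeff 1 = g.coeff 1 := by
    rw [coeff_add, coeff_C_mul_X_pow, if_neg (by omega), add_zero]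
  have hnext : (g + C u * X ^ (g.natDegree - 1)).nextCoeff = g.nextCoeff + u := by
    rw [nextCoeff_of_natDegree_pos (by omega), nextCoeff_of_natDegree_pos (by omega), hnat,
      coeff_add, coeff_C_mul_X_pow, if_pos rfl]
  rw [kloostermanWeight, kloostermanWeight, hzero, hone, hnext, hnat, mul_left_comm,
    ← AddChar.map_add_eq_mul]
  ring_nf

/-- The substitution `g ↦ g + u X^(N-1)` multiplies each term by `ψ (-a u)`. -/
theorem monicSum_kloostermanWeight_eq_zero [Finite F] (ha : a ≠ 0) (hψ : ψ ≠ 1) {N : ℕ}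
    (hN : 3 ≤ N) : monicSum (kloostermanWeight χ ψ a b) N = 0 := by
  obtain ⟨t, ht⟩ := AddChar.ne_one_iff.1 hψ
  have hmaps : ∀ u : F, ∀ g ∈ monics F N, g + C u * X ^ (N - 1) ∈ monics F N := by
    intro u g hg
    obtain ⟨hmonic, rfl⟩ := mem_monics.1 hg
    have hlt := degree_C_mul_X_pow_pred_lt (by omega : 0 < g.natDegree) u
    exact mem_monics.2 ⟨hmonic.add_of_left hlt, natDegree_add_eq_left_of_degree_lt hlt⟩
  have hinvariant : ψ t * monicSum (kloostermanWeight χ ψ a b) N =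
      monicSum (kloostermanWeight χ ψ a b) N := by
    rw [monicSum, mul_sum]
    refine sum_bij' (fun g _ => g + C (-(t / a)) * X ^ (N - 1))
      (fun g _ => g + C (t / a) * X ^ (N - 1)) (hmaps _) (hmaps _) (by simp) (by simp) ?_
    intro g hg
    obtain ⟨-, rfl⟩ := mem_monics.1 hg
    rw [kloostermanWeight_add_C_mul_X_pow χ b hN, mul_neg, neg_neg, mul_div_cancel₀ _ ha]
  exact (mul_left_eq_self₀.1 hinvariant).resolve_left ht

end KloostermanWeight

section PowerSums

/-- Newton's identities for `1 + A₁ T + A₂ T²`, whose power sums satisfy a linear recurrence of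
order two. -/
theorem exists_eq_neg_add_pow_of_newton {k : Type*} [Field k] [IsAlgClosed k] [NeZero (2 : k)]
    {A s : ℕ → k} (hA0 : A 0 = 1) (hA : ∀ N, 3 ≤ N → A N = 0)
    (hnewton : ∀ N : ℕ, (N : k) * A N = ∑ r ∈ Ioc 0 N, s r * A (N - r)) :
    ∃ w z : k, ∀ r, 1 ≤ r → s r = -(w ^ r + z ^ r) := by
  obtain ⟨w, z, hA1, hA2⟩ : ∃ w z, A 1 = -(w + z) ∧ A 2 = w * z := by
    obtain ⟨δ, hδ⟩ := IsAlgClosed.exists_eq_mul_self (A 1 ^ 2 - 4 * A 2)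
    refine ⟨(-A 1 + δ) / 2, (-A 1 - δ) / 2, by field_simp; ring, ?_⟩
    field_simp
    linear_combination -hδ
  have hs1 : s 1 = A 1 := by simpa [hA0] using (hnewton 1).symm
  have hs2 : s 2 = 2 * A 2 - A 1 ^ 2 := by
    have h := hnewton 2
    rw [show Ioc 0 2 = {1, 2} by decide, sum_pair (by decide), Nat.sub_self, hA0, hs1] at h
    push_cast at h
    linear_combination -h
  have hrec : ∀ n, s (n + 3) = -A 1 * s (n + 2) - A 2 * s (n + 1) := by
    intro n
    have h := hnewton (n + 3)
    rw [hA (n + 3) (by omega), mul_zero, ← sum_subset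
      (show ({n + 1, n + 2, n + 3} : Finset ℕ) ⊆ Ioc 0 (n + 3) by
        intro r; simp only [mem_insert, mem_singleton, mem_Ioc]; omega)
      fun r hr hnot => by
        simp only [mem_insert, mem_singleton, mem_Ioc] at hr hnot
        rw [hA _ (by omega), mul_zero]] at h
    rw [sum_insert (by simp), sum_pair (by simp), show n + 3 - (n + 1) = 2 by omega,
      show n + 3 - (n + 2) = 1 by omega, Nat.sub_self, hA0] at h
    linear_combination -h
  refine ⟨w, z, fun r hr => ?_⟩
  induction r using Nat.strong_induction_on with
  | _ r ih =>
    match r with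
    | 1 => rw [hs1, hA1, pow_one, pow_one]
    | 2 => rw [hs2, hA1, hA2]; ring
    | n + 3 =>
      rw [hrec n, ih (n + 2) (by omega) (by omega), ih (n + 1) (by omega) (by omega), hA1, hA2]
      ring

theorem le_of_pow_le_const_mul_pow {r B Q : ℝ} (hQ : 0 < Q) {m₀ : ℕ}
    (h : ∀ m, m₀ ≤ m → r ^ m ≤ B * Q ^ m) : r ≤ Q := by
  by_contra! hlt
  have hone : 1 < r / Q := (one_lt_div hQ).2 hlt
  obtain ⟨n, hn⟩ := pow_unbounded_of_one_lt B hone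
  have hle : (r / Q) ^ n ≤ (r / Q) ^ (n + m₀) := pow_le_pow_right₀ hone.le (by omega)
  have hB : (r / Q) ^ (n + m₀) ≤ B := by
    rw [div_pow, div_le_iff₀ (by positivity)]
    exact h _ (by omega)
  linarith

theorem norm_le_of_norm_pow_add_pow_le {k : Type*} [NormedField k] [NormedAlgebra ℝ k] {w z : k}
    {B Q : ℝ} (hQ : 0 < Q) {m₀ : ℕ} (h : ∀ m, m₀ ≤ m → ‖w ^ m + z ^ m‖ ≤ B * Q ^ m) :
    ‖w‖ ≤ Q := by
  rcases eq_or_ne w z with rfl | hne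
  · refine le_of_pow_le_const_mul_pow (B := B / 2) (m₀ := m₀) hQ fun m hm => ?_
    have hm' := h m hm
    have htwo : ‖(2 : k)‖ = 2 := by
      rw [← map_ofNat (algebraMap ℝ k) 2, norm_algebraMap']
      exact Real.norm_ofNat 2
    rw [← two_mul, norm_mul, norm_pow, htwo] at hm'
    linarith
  · have hpos : 0 < ‖w - z‖ := norm_pos_iff.2 (sub_ne_zero.2 hne)
    refine le_of_pow_le_const_mul_pow (B := B * (Q + ‖z‖) / ‖w - z‖) (m₀ := m₀) hQ fun m hm => ?_
    rw [div_mul_eq_mul_div, le_div_iff₀ hpos]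
    calc ‖w‖ ^ m * ‖w - z‖
        = ‖(w ^ (m + 1) + z ^ (m + 1)) - z * (w ^ m + z ^ m)‖ := by
          rw [← norm_pow, ← norm_mul]
          ring_nf
      _ ≤ B * Q ^ (m + 1) + ‖z‖ * (B * Q ^ m) := by
          refine (norm_sub_le _ _).trans (add_le_add (h _ (by omega)) ?_)
          rw [norm_mul]
          gcongr
          exact h _ hm
      _ = B * (Q + ‖z‖) * Q ^ m := by ring

end PowerSums

section PrimeModulus

theorem sum_units_mulChar {R R' : Type*} [CommRing R] [Fintype R] [Fintype Rˣ]
    [CommRing R'] (χ : MulChar R R') : ∑ u : Rˣ, χ u = ∑ x, χ x :=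
  sum_of_injOn Units.val Units.val_injective.injOn (fun _ _ => mem_coe.2 (mem_univ _))
    (fun _ _ hx => χ.map_nonunit fun hunit => hx ⟨hunit.unit, mem_coe.2 (mem_univ _), rfl⟩)
    fun _ _ => rfl

theorem card_units_pow_eq {n : ℕ} [NeZero n] {K : ℕ} (hK : K ≠ 0) (m : (ZMod n)ˣ) :
    (#{u : (ZMod n)ˣ | u ^ K = m} : ℂ) =
      ∑ χ : DirichletCharacter ℂ n with χ ^ K = 1, χ (m : ZMod n) := by
  have hφ : (n.totient : ℂ) ≠ 0 := by exact_mod_cast (Nat.totient_pos.2 (NeZero.pos n)).ne'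
  have hsum (χ : DirichletCharacter ℂ n) : ∑ u : (ZMod n)ˣ, χ ((u ^ K : (ZMod n)ˣ) : ZMod n)⁻¹ =
      if χ ^ K = 1 then (n.totient : ℂ) else 0 := by
    rw [← Equiv.sum_comp (Equiv.inv (ZMod n)ˣ)]
    have hterm (u : (ZMod n)ˣ) : χ (((Equiv.inv _ u) ^ K : (ZMod n)ˣ) : ZMod n)⁻¹ =
        (χ ^ K) (u : ZMod n) := by
      rw [MulChar.pow_apply' _ hK, ZMod.inv_coe_unit, Equiv.inv_apply, inv_pow, inv_inv,
        Units.val_pow_eq_pow_val, map_pow]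
    simp only [hterm, sum_units_mulChar]
    split_ifs with h
    · rw [h, MulChar.sum_one_eq_card_units, ZMod.card_units_eq_totient]
    · exact MulChar.sum_eq_zero_of_ne_one h
  refine mul_left_cancel₀ hφ ?_
  calc (n.totient : ℂ) * #{u : (ZMod n)ˣ | u ^ K = m}
      = ∑ u : (ZMod n)ˣ, ∑ χ : DirichletCharacter ℂ n,
          χ ((u ^ K : (ZMod n)ˣ) : ZMod n)⁻¹ * χ (m : ZMod n) := by
        simp only [DirichletCharacter.sum_char_inv_mul_char_eq ℂ (Units.isUnit _), Units.val_inj]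
        rw [← sum_filter, sum_const, nsmul_eq_mul, mul_comm]
    _ = _ := by
        rw [sum_comm, mul_sum, sum_filter]
        refine sum_congr rfl fun χ _ => ?_
        rw [← sum_mul, hsum]
        split_ifs <;> simp

theorem sum_comp_pow_eq_sum_dirichletCharacter {n : ℕ} [NeZero n] {K : ℕ} (hK : K ≠ 0)
    (f : (ZMod n)ˣ → ℂ) :
    ∑ u, f (u ^ K) = ∑ χ : DirichletCharacter ℂ n with χ ^ K = 1,
      ∑ m : (ZMod n)ˣ, χ (m : ZMod n) * f m := by
  rw [sum_comm, ← sum_fiberwise_of_maps_to (g := fun u => u ^ K) fun u _ => mem_univ (u ^ K)]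
  refine sum_congr rfl fun m _ => ?_
  rw [← sum_mul, ← card_units_pow_eq hK, ← nsmul_eq_mul, ← sum_const]
  exact sum_congr rfl fun u hu => by rw [(mem_filter.1 hu).2]

variable {p : ℕ} [Fact p.Prime]

theorem norm_sum_mulChar_mul_addChar_le {a : ZMod p} (ha : a ≠ 0) (b : ZMod p)
    (χ : MulChar (ZMod p) ℂ) {ψ : AddChar (ZMod p) ℂ} (hψ : ψ ≠ 1) :
    ‖∑ x : (ZMod p)ˣ, χ (x : ZMod p) * ψ (a * x + b * (x : ZMod p)⁻¹)‖ ≤ 2 * √p := by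
  have hp : 0 < (p : ℝ) := by exact_mod_cast (Fact.out : p.Prime).pos
  set Λ := kloostermanWeight χ ψ a b with hΛ
  have hmult : IsMonicMultiplicative Λ := isMonicMultiplicative_kloostermanWeight χ ψ a b
  obtain ⟨w, z, hwz⟩ := exists_eq_neg_add_pow_of_newton (monicSum_zero hmult)
    (fun N hN => monicSum_kloostermanWeight_eq_zero χ b ha hψ hN) (natCast_mul_monicSum hmult)
  have hbound : ∀ m, 3 ≤ m → ‖(w ^ 2) ^ m + (z ^ 2) ^ m‖ ≤ (8 * p ^ 2 + 1) * (p : ℝ) ^ m := by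
    intro m hm
    obtain ⟨n, rfl⟩ : ∃ n, m = n + 1 := ⟨m - 1, by omega⟩
    let _ : Fintype (GaloisField p (2 * (n + 1))) := Fintype.ofFinite _
    have hcard : Fintype.card (GaloisField p (2 * (n + 1))) = p ^ (2 * (n + 1)) := by
      rw [← Nat.card_eq_fintype_card, GaloisField.card p _ (by omega)]
    have hweil := norm_sum_mulChar_norm_mul_addChar_trace_le hcard (by omega)
      ((_root_.map_ne_zero (algebraMap (ZMod p) _)).2 ha) (algebraMap _ _ b) χ hψ
    rwa [sum_mulChar_norm_mul_addChar_trace, GaloisField.finrank p (by omega),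
      hwz _ (by omega), norm_neg, pow_mul, pow_mul] at hweil
  have hw := norm_le_of_norm_pow_add_pow_le hp hbound
  have hz := norm_le_of_norm_pow_add_pow_le hp fun m hm => add_comm ((w ^ 2) ^ m) _ ▸ hbound m hm
  rw [norm_pow] at hw hz
  have hsum := sum_mulChar_norm_mul_addChar_trace (K := ZMod p) χ ψ a b
  simp only [Algebra.norm_self, Algebra.trace_self, Algebra.algebraMap_self, MonoidHom.id_apply,
    LinearMap.id_apply, RingHom.id_apply, Module.finrank_self, ← hΛ, hwz 1 le_rfl, pow_one] at hsum
  rw [hsum, norm_neg]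
  linarith [norm_add_le w z, Real.le_sqrt_of_sq_le hw, Real.le_sqrt_of_sq_le hz]

theorem norm_sum_comp_pow_le {K : ℕ} (hK : K ≠ 0) {f : (ZMod p)ˣ → ℂ} {M : ℝ}
    (hf : ∀ χ : DirichletCharacter ℂ p, ‖∑ m : (ZMod p)ˣ, χ (m : ZMod p) * f m‖ ≤ M) :
    ‖∑ u, f (u ^ K)‖ ≤ K * M := by
  have hM : 0 ≤ M := (norm_nonneg _).trans (hf 1)
  have hcard : #{χ : DirichletCharacter ℂ p | χ ^ K = 1} ≤ K := by
    obtain ⟨e⟩ := DirichletCharacter.mulEquiv_units ℂ p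
    have : IsCyclic (DirichletCharacter ℂ p) := isCyclic_of_surjective e.symm e.symm.surjective
    convert IsCyclic.card_pow_eq_one_le (α := DirichletCharacter ℂ p) (Nat.pos_of_ne_zero hK)
  rw [sum_comp_pow_eq_sum_dirichletCharacter hK]
  refine (norm_sum_le_of_le _ fun χ _ => hf χ).trans ?_
  rw [sum_const, nsmul_eq_mul]
  gcongr

end PrimeModulus

/-! ### Sums of `ψ (a x ^ K + b x ^ (-K))` modulo prime powers -/

section CommRing

variable {R S : Type*} [CommRing R] [CommRing S] {K : ℕ}

/-- The Laurent binomial `a x ^ K + b x ^ (-K)` on the units of a ring: the phase of the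
exponential sums `powKloostermanSum`. -/
def powPhase (K : ℕ) (a b : R) (x : Rˣ) : R :=
  a * (x ^ K : Rˣ) + b * ((x ^ K)⁻¹ : Rˣ)

/-- The sum of `ψ (a x ^ K + b x ^ (-K))` over the units of a finite ring, which is a Kloosterman
sum when `K = 1`. -/
noncomputable def powKloostermanSum [Fintype Rˣ] (ψ : AddChar R ℂ) (K : ℕ) (a b : R) : ℂ :=
  ∑ x : Rˣ, ψ (powPhase K a b x)

theorem powPhase_inv (a b : R) (x : Rˣ) : powPhase K a b x⁻¹ = powPhase K b a x := by
  rw [powPhase, powPhase, inv_pow, inv_inv, add_comm]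

theorem powKloostermanSum_comm [Fintype Rˣ] (ψ : AddChar R ℂ) (a b : R) :
    powKloostermanSum ψ K a b = powKloostermanSum ψ K b a := by
  rw [powKloostermanSum, ← Equiv.sum_comp (Equiv.inv Rˣ)]
  exact sum_congr rfl fun x _ => by rw [Equiv.inv_apply, powPhase_inv]

theorem map_powPhase (f : R →+* S) (a b : R) (x : Rˣ) :
    f (powPhase K a b x) = powPhase K (f a) (f b) (Units.map f x) := by
  rw [powPhase, powPhase, map_add, map_mul, map_mul, ← map_pow, ← map_inv]
  rfl

theorem mul_powPhase (c a b : R) (x : Rˣ) :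
    c * powPhase K a b x = powPhase K (c * a) (c * b) x := by
  rw [powPhase, powPhase, mul_add, mul_assoc, mul_assoc]

theorem choose_two_add_succ_choose_two (K : ℕ) : K.choose 2 + (K + 1).choose 2 = K ^ 2 := by
  induction K with
  | zero => rfl
  | succ K ih =>
    have h₁ : (K + 1).choose 2 = K + K.choose 2 := by
      rw [Nat.choose_succ_succ' K 1, Nat.choose_one_right]
    have h₂ : (K + 2).choose 2 = K + 1 + (K + 1).choose 2 := by
      rw [Nat.choose_succ_succ' (K + 1) 1, Nat.choose_one_right]
    linear_combination ih + h₂ + h₁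

theorem one_add_pow_of_cube_eq_zero {y : R} (hy : y ^ 3 = 0) (K : ℕ) :
    (1 + y) ^ K = 1 + K * y + K.choose 2 * y ^ 2 := by
  induction K with
  | zero => simp
  | succ K ih =>
    rw [pow_succ, ih, Nat.choose_succ_succ' K 1, Nat.choose_one_right]
    push_cast
    linear_combination (K.choose 2 : R) * hy

/-- Second order Taylor expansion of the phase under `x ↦ x (1 + y)`. -/
theorem powPhase_mul_of_cube_eq_zero (a b : R) (x : Rˣ) {u : Rˣ} {y : R} (hu : (u : R) = 1 + y)
    (hy : y ^ 3 = 0) :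
    powPhase K a b (x * u) = powPhase K a b x + (K * y * powPhase K a (-b) x +
      y ^ 2 * powPhase K (K.choose 2 * a) ((K + 1).choose 2 * b) x) := by
  have hpow : ((u ^ K : Rˣ) : R) = 1 + K * y + K.choose 2 * y ^ 2 := by
    rw [Units.val_pow_eq_pow_val, hu, one_add_pow_of_cube_eq_zero hy]
  have hinv : (((u ^ K)⁻¹ : Rˣ) : R) = 1 - K * y + (K + 1).choose 2 * y ^ 2 := by
    have hchoose : (K.choose 2 + (K + 1).choose 2 : R) = K ^ 2 := by
      exact_mod_cast congrArg (Nat.cast (R := R)) (choose_two_add_succ_choose_two K)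
    refine Units.inv_eq_of_mul_eq_one_right ?_
    rw [hpow]
    linear_combination y ^ 2 * hchoose +
      (K * (K + 1).choose 2 - K * K.choose 2 + K.choose 2 * (K + 1).choose 2 * y : R) * hy
  rw [powPhase, powPhase, powPhase, powPhase, mul_pow, mul_inv, Units.val_mul, Units.val_mul,
    hpow, hinv]
  ring

end CommRing

section Averaging

variable {G R ι : Type*} [Group G] [Fintype G] [CommRing R] [Fintype ι] {ψ : AddChar R ℂ}

/-- Averaging over the translations `x ↦ x * u t`. -/
theorem card_mul_sum_addChar {u : ι → G} {f : G → R} {g : G → ι → R}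
    (h : ∀ x t, f (x * u t) = f x + g x t) :
    Fintype.card ι * ∑ x, ψ (f x) = ∑ x, ψ (f x) * ∑ t, ψ (g x t) :=
  calc Fintype.card ι * ∑ x, ψ (f x)
      = ∑ t, ∑ x, ψ (f (x * u t)) := by
        have hshift (t : ι) : ∑ x, ψ (f (x * u t)) = ∑ x, ψ (f x) :=
          Equiv.sum_comp (Equiv.mulRight (u t)) fun x => ψ (f x)
        simp only [hshift, sum_const, card_univ, nsmul_eq_mul]
    _ = ∑ x, ψ (f x) * ∑ t, ψ (g x t) := by
        rw [sum_comm]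
        simp_rw [h, AddChar.map_add_eq_mul, mul_sum]

theorem norm_sum_addChar_le_card_mul [Nonempty ι] [Finite R] {u : ι → G} {f : G → R}
    {g : G → ι → R} (h : ∀ x t, f (x * u t) = f x + g x t) {Z : Finset G} {D : ℝ}
    (hZ : ∀ x ∈ Z, ‖∑ t, ψ (g x t)‖ ≤ Fintype.card ι * D)
    (hZ' : ∀ x ∉ Z, ∑ t, ψ (g x t) = 0) : ‖∑ x, ψ (f x)‖ ≤ #Z * D := by
  have hι : 0 < (Fintype.card ι : ℝ) := by exact_mod_cast Fintype.card_pos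
  refine le_of_mul_le_mul_left ?_ hι
  calc Fintype.card ι * ‖∑ x, ψ (f x)‖
      = ‖∑ x ∈ Z, ψ (f x) * ∑ t, ψ (g x t)‖ := by
        rw [← Complex.norm_natCast, ← norm_mul, card_mul_sum_addChar h,
          sum_subset (subset_univ Z) fun x _ hx => by rw [hZ' x hx, mul_zero]]
    _ ≤ ∑ _x ∈ Z, Fintype.card ι * D := by
        refine norm_sum_le_of_le _ fun x hx => ?_
        rw [norm_mul, AddChar.norm_apply, one_mul]
        exact hZ x hx
    _ = Fintype.card ι * (#Z * D) := by rw [sum_const, nsmul_eq_mul, mul_left_comm]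

end Averaging

section FiniteRing

variable {R : Type*} [CommRing R] [Fintype R] {ψ : AddChar R ℂ} {K : ℕ}

theorem norm_sum_addChar_quadratic_sq_le (hψ : ψ.IsPrimitive) (α β : R) :
    ‖∑ t, ψ (α * t + β * t ^ 2)‖ ^ 2 ≤ Fintype.card R * #{h : R | 2 * β * h = 0} := by
  have hexpand : ((‖∑ t, ψ (α * t + β * t ^ 2)‖ ^ 2 : ℝ) : ℂ) =
      ∑ h, ψ (α * h + β * h ^ 2) * ∑ t, ψ (t * (2 * β * h)) := by
    rw [Complex.ofReal_pow, ← Complex.mul_conj', map_sum, sum_mul_sum, sum_comm]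
    simp_rw [mul_sum]
    rw [sum_comm (s := univ (α := R)) (t := univ (α := R)) (f := fun h t =>
      ψ (α * h + β * h ^ 2) * ψ (t * (2 * β * h)))]
    refine sum_congr rfl fun t _ => ?_
    rw [← Equiv.sum_comp (Equiv.addRight t)]
    refine sum_congr rfl fun h _ => ?_
    rw [← AddChar.map_neg_eq_conj, ← AddChar.map_add_eq_mul, ← AddChar.map_add_eq_mul,
      Equiv.coe_addRight]
    ring_nf
  calc ‖∑ t, ψ (α * t + β * t ^ 2)‖ ^ 2
      = ‖∑ h, ψ (α * h + β * h ^ 2) * ∑ t, ψ (t * (2 * β * h))‖ := by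
        rw [← hexpand, Complex.norm_real, Real.norm_of_nonneg (by positivity)]
    _ ≤ ∑ h : R, if 2 * β * h = 0 then (Fintype.card R : ℝ) else 0 := by
        refine norm_sum_le_of_le _ fun h _ => ?_
        rw [norm_mul, AddChar.norm_apply, one_mul, AddChar.sum_mulShift _ hψ]
        split_ifs <;> simp
    _ = Fintype.card R * #{h : R | 2 * β * h = 0} := by
        rw [← sum_filter, sum_const, nsmul_eq_mul, mul_comm]

theorem sum_addChar_quadratic_eq_zero (hψ : ψ.IsPrimitive) {α β c : R} (hα : c * α ≠ 0)
    (hβ : c * β = 0) : ∑ t, ψ (α * t + β * t ^ 2) = 0 := by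
  obtain ⟨v, hv⟩ := AddChar.ne_one_iff.1 (hψ hα)
  rw [AddChar.mulShift_apply] at hv
  have hshift : ψ (c * α * v) * ∑ t, ψ (α * t + β * t ^ 2) = ∑ t, ψ (α * t + β * t ^ 2) := by
    rw [mul_sum, ← Equiv.sum_comp (Equiv.addRight (c * v)) fun t => ψ (α * t + β * t ^ 2)]
    refine sum_congr rfl fun t _ => ?_
    rw [← AddChar.map_add_eq_mul, Equiv.coe_addRight]
    congr 1
    linear_combination -(2 * t * v + c * v ^ 2) * hβ
  exact (mul_left_eq_self₀.1 hshift).resolve_left hv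

/-- The substitutions `x ↦ x (1 + π t)` annihilate the contribution of every `x` that is not an
approximate critical point of the phase. -/
theorem norm_powKloostermanSum_le_card_mul [Fintype Rˣ] (hψ : ψ.IsPrimitive) (a b : R) {π ϖ : R}
    (hπ : π ^ 3 = 0) (hϖ : ϖ * π ^ 2 = 0) {D : ℝ} (hD₀ : 0 ≤ D)
    (hD : ∀ x : Rˣ, K * (ϖ * π) * powPhase K a (-b) x = 0 →
      (#{h : R | 2 * (π ^ 2 * powPhase K (K.choose 2 * a) ((K + 1).choose 2 * b) x) * h = 0} : ℝ)
        ≤ Fintype.card R * D ^ 2) :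
    ‖powKloostermanSum ψ K a b‖ ≤
      #{x : Rˣ | K * (ϖ * π) * powPhase K a (-b) x = 0} * D := by
  have hcube : ∀ t, (π * t) ^ 3 = 0 := fun t => by rw [mul_pow, hπ, zero_mul]
  have hunit : ∀ t, IsUnit (1 + π * t) := fun t => IsNilpotent.isUnit_one_add ⟨3, hcube t⟩
  set α : Rˣ → R := fun x => K * π * powPhase K a (-b) x with hα
  set β : Rˣ → R := fun x => π ^ 2 * powPhase K (K.choose 2 * a) ((K + 1).choose 2 * b) x with hβ
  have hcrit : ∀ x, K * (ϖ * π) * powPhase K a (-b) x = ϖ * α x := fun x => by rw [hα]; ring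
  refine norm_sum_addChar_le_card_mul (u := fun t => (hunit t).unit)
    (g := fun x t => α x * t + β x * t ^ 2) (fun x t => ?_) (fun x hx => ?_) fun x hx => ?_
  · rw [powPhase_mul_of_cube_eq_zero a b x (hunit t).unit_spec (hcube t), hα, hβ]
    ring
  · refine le_of_sq_le_sq ?_ (by positivity)
    calc ‖∑ t, ψ (α x * t + β x * t ^ 2)‖ ^ 2
        ≤ Fintype.card R * #{h : R | 2 * β x * h = 0} := norm_sum_addChar_quadratic_sq_le hψ _ _
      _ ≤ Fintype.card R * (Fintype.card R * D ^ 2) := by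
          gcongr
          exact hD x (mem_filter.1 hx).2
      _ = (Fintype.card R * D) ^ 2 := by ring
  · refine sum_addChar_quadratic_eq_zero hψ (c := ϖ) ?_ (by rw [hβ, ← mul_assoc, hϖ, zero_mul])
    rw [← hcrit]
    simpa using hx

end FiniteRing

section CyclicUnits

theorem card_filter_pow_eq_le {G : Type*} [CommGroup G] [Fintype G] [DecidableEq G] [IsCyclic G]
    {m : ℕ} (hm : 0 < m) (y : G) : #{x : G | x ^ m = y} ≤ m := by
  by_cases hy : ∃ z, z ^ m = y
  · refine le_trans (le_of_eq ?_) (IsCyclic.card_pow_eq_one_le (α := G) hm)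
    exact MonoidHom.card_fiber_eq_of_mem_range (powMonoidHom m : G →* G) hy ⟨1, one_pow m⟩
  · simp only [not_exists] at hy
    simp [hy]

theorem card_filter_natCast_mul_powPhase_eq_zero_le {R : Type*} [CommRing R] [Finite R]
    [IsAddCyclic R] [Fintype Rˣ] [IsCyclic Rˣ] {K n : ℕ} (hK : 0 < K) (hn : 0 < n) {a : R}
    (ha : IsUnit a) (b : R) :
    #{x : Rˣ | (n : R) * powPhase K a (-b) x = 0} ≤ 2 * K * n := by
  let _ := Fintype.ofFinite R
  set X : Finset Rˣ := {x : Rˣ | (n : R) * powPhase K a (-b) x = 0}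
  have hpow : ∀ x ∈ X, (n : R) * (a * (x : R) ^ (2 * K)) = n * b := by
    intro x hx
    have hzero : (n : R) * powPhase K a (-b) x = 0 := (mem_filter.1 hx).2
    have hinv : ((x ^ K : Rˣ) : R) * ((x ^ K)⁻¹ : Rˣ) = 1 := Units.mul_inv _
    rw [powPhase, Units.val_pow_eq_pow_val] at hzero
    rw [Units.val_pow_eq_pow_val] at hinv
    linear_combination (x : R) ^ K * hzero + n * b * hinv
  rcases X.eq_empty_or_nonempty with hempty | ⟨x₀, hx₀⟩
  · simp [hempty]
  calc #X ≤ 2 * K * #{w : R | n • w = 0} := by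
        refine card_le_mul_card_image_of_maps_to
          (f := fun x : Rˣ => (x : R) ^ (2 * K) - x₀ ^ (2 * K))
          (fun x hx => mem_filter.2 ⟨mem_univ _, ?_⟩) _ fun w _ => ?_
        · rw [nsmul_eq_mul]
          refine ha.mul_right_eq_zero.1 ?_
          linear_combination hpow x hx - hpow x₀ hx₀
        · by_cases hw : ∃ y : Rˣ, (y : R) ^ (2 * K) - x₀ ^ (2 * K) = w
          · obtain ⟨y, rfl⟩ := hw
            refine (card_le_card fun x hx => ?_).trans
              (card_filter_pow_eq_le (mul_pos two_pos hK) (y ^ (2 * K)))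
            rw [mem_filter_univ, Units.ext_iff, Units.val_pow_eq_pow_val, Units.val_pow_eq_pow_val]
            exact sub_left_injective (mem_filter.1 hx).2
          · rw [filter_false_of_mem fun x _ hx => hw ⟨x, hx⟩]
            simp
    _ ≤ 2 * K * n := Nat.mul_le_mul_left _ (IsAddCyclic.card_nsmul_eq_zero_le hn)

end CyclicUnits

section PrimePower

variable {p r n K : ℕ}

theorem pow_natCast_zmod_eq_zero (hn : n = p ^ r) {m : ℕ} (hm : r ≤ m) : (p : ZMod n) ^ m = 0 := by
  rw [← Nat.cast_pow, ZMod.natCast_eq_zero_iff, hn]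
  exact pow_dvd_pow p hm

theorem isCyclic_units_zmod_of_odd_prime_pow (hp : p.Prime) (hodd : Odd p) (hn : n = p ^ r) :
    IsCyclic (ZMod n)ˣ :=
  (ZMod.isCyclic_units_iff_of_odd (hn ▸ hodd.pow)).2 ⟨p, r, hp, hodd, hn⟩

variable [NeZero n] {a : ZMod n} {ψ : AddChar (ZMod n) ℂ}

theorem norm_powKloostermanSum_le_of_le_two_mul (hp : p.Prime) (hodd : Odd p) (hn : n = p ^ r)
    (hK : 0 < K) (ha : IsUnit a) (b : ZMod n) (hψ : ψ.IsPrimitive) {m : ℕ} (hm : r ≤ 2 * m) :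
    ‖powKloostermanSum ψ K a b‖ ≤ 2 * (K : ℝ) ^ 2 * (p : ℝ) ^ m := by
  have := isCyclic_units_zmod_of_odd_prime_pow hp hodd hn
  have hsq : ((p : ZMod n) ^ m) ^ 2 = 0 := by
    rw [← pow_mul]
    exact pow_natCast_zmod_eq_zero hn (by omega)
  have hsum := norm_powKloostermanSum_le_card_mul (K := K) (ϖ := 1) (D := 1) hψ a b
    (by rw [pow_succ, hsq, zero_mul]) (by rw [hsq, mul_zero]) zero_le_one fun x _ => by
      rw [one_pow, mul_one]
      exact_mod_cast card_le_univ _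
  have hcard := card_filter_natCast_mul_powPhase_eq_zero_le hK
    (Nat.mul_pos hK (pow_pos hp.pos m)) ha b
  rw [mul_one] at hsum
  simp only [one_mul] at hsum
  push_cast at hcard
  refine (hsum.trans (Nat.cast_le.2 hcard)).trans_eq ?_
  push_cast
  ring

/-- At an approximate critical point the quadratic coefficient of the phase is `p ^ (2 s)` times
a unit. -/
theorem card_filter_quadratic_coeff_mul_eq_zero_le (hp : p.Prime) (hodd : Odd p) {s : ℕ}
    (hs : 0 < s) (hn : n = p ^ (2 * s + 1)) (hpK : ¬p ∣ K) (ha : IsUnit a) {b : ZMod n}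
    {x : (ZMod n)ˣ} (hx : (K : ZMod n) * (p * p ^ s) * powPhase K a (-b) x = 0) :
    #{h : ZMod n | 2 * ((p ^ s) ^ 2 * powPhase K (K.choose 2 * a) ((K + 1).choose 2 * b) x) * h
      = 0} ≤ p ^ (2 * s) := by
  have hunit {m : ℕ} (hm : m.Coprime p) : IsUnit (m : ZMod n) := by
    rw [ZMod.isUnit_iff_coprime, hn]
    exact Nat.Coprime.pow_right _ hm
  have htwo : IsUnit (2 : ZMod n) := by exact_mod_cast hunit (Nat.coprime_two_left.2 hodd)
  have hKunit : IsUnit (K : ZMod n) := hunit (hp.coprime_iff_not_dvd.2 hpK).symm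
  have hcrit : (p : ZMod n) ^ (2 * s) * powPhase K a (-b) x = 0 := by
    rw [mul_assoc] at hx
    have h := hKunit.mul_right_eq_zero.1 hx
    rw [show 2 * s = s - 1 + (s + 1) by omega, pow_add, mul_assoc, pow_succ' _ s, h, mul_zero]
  have hcoeff : 2 * ((p ^ s) ^ 2 * powPhase K (K.choose 2 * a) ((K + 1).choose 2 * b) x) =
      2 * K ^ 2 * (a * ((x ^ K : (ZMod n)ˣ) : ZMod n)) * (p : ZMod n) ^ (2 * s) := by
    have hchoose : (K.choose 2 + (K + 1).choose 2 : ZMod n) = K ^ 2 := by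
      exact_mod_cast congrArg (Nat.cast (R := ZMod n)) (choose_two_add_succ_choose_two K)
    rw [powPhase] at hcrit ⊢
    linear_combination 2 * (p : ZMod n) ^ (2 * s) * a * ((x ^ K : (ZMod n)ˣ) : ZMod n) * hchoose -
      2 * ((K + 1).choose 2 : ZMod n) * hcrit
  have hcoeff_unit : IsUnit (2 * K ^ 2 * (a * ((x ^ K : (ZMod n)ˣ) : ZMod n))) :=
    (htwo.mul (hKunit.pow 2)).mul (ha.mul (Units.isUnit _))
  refine le_trans (card_le_card fun h hh => mem_filter.2 ⟨mem_univ _, ?_⟩)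
    (IsAddCyclic.card_nsmul_eq_zero_le (α := ZMod n) (pow_pos hp.pos (2 * s)))
  have hzero := (mem_filter.1 hh).2
  rw [hcoeff, mul_assoc] at hzero
  rw [nsmul_eq_mul, Nat.cast_pow]
  exact hcoeff_unit.mul_right_eq_zero.1 hzero

theorem norm_powKloostermanSum_le_of_odd_exponent (hp : p.Prime) (hodd : Odd p) {s : ℕ}
    (hs : 0 < s) (hn : n = p ^ (2 * s + 1)) (hpK : ¬p ∣ K) (ha : IsUnit a) (b : ZMod n)
    (hψ : ψ.IsPrimitive) : ‖powKloostermanSum ψ K a b‖ ≤ 2 * (K : ℝ) ^ 2 * √n := by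
  have := isCyclic_units_zmod_of_odd_prime_pow hp hodd hn
  have hK : 0 < K := Nat.pos_of_ne_zero fun h => hpK (h ▸ dvd_zero p)
  have hp₀ : (0 : ℝ) < p := by exact_mod_cast hp.pos
  have hcard : (Fintype.card (ZMod n) : ℝ) * (1 / √p) ^ 2 = (p ^ (2 * s) : ℕ) := by
    rw [ZMod.card, hn, div_pow, Real.sq_sqrt hp₀.le]
    push_cast
    field_simp
    ring
  have hsum := norm_powKloostermanSum_le_card_mul (K := K) (π := p ^ s) (ϖ := p) (D := 1 / √p) hψ
    a b (by rw [← pow_mul]; exact pow_natCast_zmod_eq_zero hn (by omega))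
    (by rw [← pow_mul, ← pow_succ']; exact pow_natCast_zmod_eq_zero hn (by omega))
    (by positivity) fun x hx => by
      rw [hcard, Nat.cast_le]
      convert card_filter_quadratic_coeff_mul_eq_zero_le hp hodd hs hn hpK ha hx
  have hcount := card_filter_natCast_mul_powPhase_eq_zero_le hK
    (Nat.mul_pos hK (pow_pos hp.pos (s + 1))) ha b
  push_cast at hcount
  simp only [← pow_succ'] at hsum
  have hsqrt : √(n : ℝ) = p ^ s * √p := by
    rw [hn, Nat.cast_pow, pow_succ, mul_comm 2 s, pow_mul, Real.sqrt_mul (by positivity),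
      Real.sqrt_sq (by positivity)]
  calc ‖powKloostermanSum ψ K a b‖
      ≤ (2 * K * (K * p ^ (s + 1)) : ℕ) * (1 / √p) :=
        hsum.trans (mul_le_mul_of_nonneg_right (Nat.cast_le.2 hcount) (by positivity))
    _ = 2 * (K : ℝ) ^ 2 * √n := by
        rw [hsqrt, mul_one_div, div_eq_iff (by positivity)]
        push_cast
        linear_combination (-2 * (K : ℝ) ^ 2 * p ^ s) * Real.mul_self_sqrt hp₀.le

theorem norm_powKloostermanSum_le_of_dvd (hp : p.Prime) (hodd : Odd p) {s : ℕ}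
    (hn : n = p ^ (2 * s + 1)) (hK : 0 < K) (hpK : p ∣ K) (ha : IsUnit a) (b : ZMod n)
    (hψ : ψ.IsPrimitive) : ‖powKloostermanSum ψ K a b‖ ≤ 2 * (K : ℝ) ^ 3 * √n := by
  have hpK' : √(p : ℝ) ≤ K := by
    rw [Real.sqrt_le_left (by positivity)]
    have : (p : ℝ) ≤ K := by exact_mod_cast Nat.le_of_dvd hK hpK
    exact this.trans (le_self_pow₀ (by exact_mod_cast hK) two_ne_zero)
  refine (norm_powKloostermanSum_le_of_le_two_mul hp hodd hn hK ha b hψ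
    (m := s + 1) (by omega)).trans ?_
  calc 2 * (K : ℝ) ^ 2 * (p : ℝ) ^ (s + 1)
      = 2 * (K : ℝ) ^ 2 * √p * (p ^ s * √p) := by
        linear_combination (-2 * (K : ℝ) ^ 2 * p ^ s) * Real.mul_self_sqrt (Nat.cast_nonneg p)
    _ ≤ 2 * (K : ℝ) ^ 2 * K * (p ^ s * √p) := by gcongr
    _ = 2 * (K : ℝ) ^ 3 * √n := by
        rw [hn, Nat.cast_pow, pow_succ (p : ℝ), mul_comm 2 s, pow_mul,
          Real.sqrt_mul (by positivity), Real.sqrt_sq (by positivity)]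
        ring

theorem norm_powKloostermanSum_prime_le [Fact p.Prime] {a : ZMod p} (ha : a ≠ 0) (b : ZMod p)
    {ψ : AddChar (ZMod p) ℂ} (hψ : ψ ≠ 1) (hK : K ≠ 0) :
    ‖powKloostermanSum ψ K a b‖ ≤ 2 * K * √p := by
  have hbound (χ : DirichletCharacter ℂ p) :
      ‖∑ u : (ZMod p)ˣ, χ (u : ZMod p) * ψ (a * u + b * (u⁻¹ : (ZMod p)ˣ))‖ ≤ 2 * √p := by
    simpa only [Units.val_inv_eq_inv_val] using norm_sum_mulChar_mul_addChar_le ha b χ hψ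
  exact (norm_sum_comp_pow_le hK hbound).trans_eq (by ring)

theorem norm_powKloostermanSum_prime_pow_le (hp : p.Prime) (hodd : Odd p) (hr : r ≠ 0)
    (hn : n = p ^ r) (hK : 0 < K) (ha : IsUnit a) (b : ZMod n) (hψ : ψ.IsPrimitive) :
    ‖powKloostermanSum ψ K a b‖ ≤ 2 * (K : ℝ) ^ 3 * √n := by
  have hK₁ : (1 : ℝ) ≤ K := by exact_mod_cast hK
  have hK₂ : (K : ℝ) ^ 2 ≤ (K : ℝ) ^ 3 := pow_le_pow_right₀ hK₁ (by norm_num)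
  obtain ⟨s, rfl | rfl⟩ := Nat.even_or_odd' r
  · refine (norm_powKloostermanSum_le_of_le_two_mul hp hodd hn hK ha b hψ le_rfl).trans ?_
    rw [hn, Nat.cast_pow, mul_comm 2 s, pow_mul, Real.sqrt_sq (by positivity)]
    gcongr
  by_cases hpK : p ∣ K
  · exact norm_powKloostermanSum_le_of_dvd hp hodd hn hK hpK ha b hψ
  obtain rfl | hs := Nat.eq_zero_or_pos s
  · obtain rfl : n = p := by simpa using hn
    have : Fact n.Prime := ⟨hp⟩
    have hψ₁ : ψ ≠ 1 := by simpa using hψ one_ne_zero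
    refine (norm_powKloostermanSum_prime_le ha.ne_zero b hψ₁ hK.ne').trans ?_
    gcongr
    exact le_self_pow₀ hK₁ (by norm_num)
  · refine (norm_powKloostermanSum_le_of_odd_exponent hp hodd hs hn hpK ha b hψ).trans ?_
    gcongr

end PrimePower

/-! ### Odd moduli -/

section Multiplicativity

variable {R S : Type*} [CommRing R] [CommRing S]

theorem isPrimitive_compAddMonoidHom_ringEquiv {ψ : AddChar S ℂ} (hψ : ψ.IsPrimitive)
    (e : R ≃+* S) : (ψ.compAddMonoidHom (e : R →+ S)).IsPrimitive := by
  intro c hc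
  obtain ⟨x, hx⟩ := AddChar.ne_one_iff.1 (hψ ((map_ne_zero_iff e e.injective).2 hc))
  refine AddChar.ne_one_iff.2 ⟨e.symm x, ?_⟩
  simpa [AddChar.mulShift_apply] using hx

theorem isPrimitive_compAddMonoidHom_inl {ψ : AddChar (R × S) ℂ} (hψ : ψ.IsPrimitive) :
    (ψ.compAddMonoidHom (AddMonoidHom.inl R S)).IsPrimitive := by
  intro c hc
  obtain ⟨x, hx⟩ := AddChar.ne_one_iff.1 (hψ (a := (c, 0)) (by simpa using hc))
  refine AddChar.ne_one_iff.2 ⟨x.1, ?_⟩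
  simpa [AddChar.mulShift_apply, Prod.mul_def] using hx

theorem isPrimitive_compAddMonoidHom_inr {ψ : AddChar (R × S) ℂ} (hψ : ψ.IsPrimitive) :
    (ψ.compAddMonoidHom (AddMonoidHom.inr R S)).IsPrimitive := by
  intro c hc
  obtain ⟨x, hx⟩ := AddChar.ne_one_iff.1 (hψ (a := (0, c)) (by simpa using hc))
  refine AddChar.ne_one_iff.2 ⟨x.2, ?_⟩
  simpa [AddChar.mulShift_apply, Prod.mul_def] using hx

variable [Fintype Rˣ] [Fintype Sˣ] (K : ℕ)

theorem powKloostermanSum_compAddMonoidHom_ringEquiv (ψ : AddChar S ℂ) (e : R ≃+* S) (a b : R) :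
    powKloostermanSum (ψ.compAddMonoidHom (e : R →+ S)) K a b =
      powKloostermanSum ψ K (e a) (e b) := by
  rw [powKloostermanSum, powKloostermanSum, ← Equiv.sum_comp (Units.mapEquiv e.toMulEquiv).toEquiv]
  exact sum_congr rfl fun x _ => congrArg ψ (map_powPhase (e : R →+* S) a b x)

theorem powKloostermanSum_prod [Fintype (R × S)ˣ] (ψ : AddChar (R × S) ℂ) (a b : R × S) :
    powKloostermanSum ψ K a b =
      powKloostermanSum (ψ.compAddMonoidHom (AddMonoidHom.inl R S)) K a.1 b.1 *
        powKloostermanSum (ψ.compAddMonoidHom (AddMonoidHom.inr R S)) K a.2 b.2 := by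
  rw [powKloostermanSum, powKloostermanSum, powKloostermanSum, sum_mul_sum, ← sum_product',
    univ_product_univ, ← Equiv.sum_comp (MulEquiv.prodUnits (M := R) (N := S)).toEquiv]
  refine sum_congr rfl fun x _ => ?_
  rw [AddChar.compAddMonoidHom_apply, AddChar.compAddMonoidHom_apply, ← AddChar.map_add_eq_mul]
  congr 1
  refine Prod.ext ?_ ?_
  · simpa using! map_powPhase (RingHom.fst R S) a b x
  · simpa using! map_powPhase (RingHom.snd R S) a b x

end Multiplicativity

theorem isUnit_or_isUnit_of_isCoprime_zmod {p r n : ℕ} (hp : p.Prime) (hr : r ≠ 0) (hn : n = p ^ r)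
    {a b : ZMod n} (hab : IsCoprime a b) : IsUnit a ∨ IsUnit b := by
  subst hn
  have : NeZero (p ^ r) := ⟨pow_ne_zero r hp.ne_zero⟩
  have hdvd {c : ZMod (p ^ r)} (hc : ¬ IsUnit c) : (p : ZMod (p ^ r)) ∣ c := by
    rw [← ZMod.natCast_zmod_val c] at hc ⊢
    rw [ZMod.isUnit_iff_coprime, Nat.coprime_pow_right_iff (Nat.pos_of_ne_zero hr),
      Nat.coprime_comm, hp.coprime_iff_not_dvd, not_not] at hc
    exact Nat.cast_dvd_cast hc
  by_contra! h
  have hunit : IsUnit (p : ZMod (p ^ r)) := hab.isUnit_of_dvd' (hdvd h.1) (hdvd h.2)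
  rw [ZMod.isUnit_iff_coprime, Nat.coprime_pow_right_iff (Nat.pos_of_ne_zero hr),
    Nat.coprime_self] at hunit
  exact hp.ne_one hunit

theorem norm_powKloostermanSum_le {K : ℕ} (hK : 0 < K) (q : ℕ) [NeZero q] (hq : Odd q)
    {a b : ZMod q} (hab : IsCoprime a b) {ψ : AddChar (ZMod q) ℂ} (hψ : ψ.IsPrimitive) :
    ‖powKloostermanSum ψ K a b‖ ≤ (2 * (K : ℝ) ^ 3) ^ #q.primeFactors * √q := by
  rename_i hne
  induction q using Nat.recOnPosPrimePosCoprime generalizing hne with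
  | zero => exact absurd rfl hne.out
  | one =>
    refine (norm_sum_le_of_le (n := fun _ => (1 : ℝ)) _ fun x _ => ?_).trans (by simp)
    rw [AddChar.norm_apply]
  | prime_pow p r hp hr =>
    have hodd : Odd p := (Nat.odd_pow_iff hr.ne').1 hq
    rw [Nat.primeFactors_prime_pow hr.ne' hp, card_singleton, pow_one]
    rcases isUnit_or_isUnit_of_isCoprime_zmod hp hr.ne' rfl hab with ha | hb
    · exact norm_powKloostermanSum_prime_pow_le hp hodd hr.ne' rfl hK ha b hψ
    · rw [powKloostermanSum_comm]
      exact norm_powKloostermanSum_prime_pow_le hp hodd hr.ne' rfl hK hb a hψ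
  | coprime m n hm hn hmn ihm ihn =>
    have : NeZero m := ⟨by omega⟩
    have : NeZero n := ⟨by omega⟩
    set e := ZMod.chineseRemainder hmn
    have hcop : IsCoprime (e a) (e b) := hab.map (e : ZMod (m * n) →+* ZMod m × ZMod n)
    have hprim := isPrimitive_compAddMonoidHom_ringEquiv hψ e.symm
    have hsplit := powKloostermanSum_compAddMonoidHom_ringEquiv K ψ e.symm (e a) (e b)
    rw [powKloostermanSum_prod, e.symm_apply_apply, e.symm_apply_apply] at hsplit
    rw [← hsplit, norm_mul, hmn.primeFactors_mul, card_union_of_disjoint hmn.disjoint_primeFactors,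
      pow_add, Nat.cast_mul, Real.sqrt_mul (Nat.cast_nonneg m), mul_mul_mul_comm]
    have hodd := Nat.odd_mul.1 hq
    exact mul_le_mul
      (ihm hodd.1 (hcop.map (RingHom.fst _ _)) (isPrimitive_compAddMonoidHom_inl hprim))
      (ihn hodd.2 (hcop.map (RingHom.snd _ _)) (isPrimitive_compAddMonoidHom_inr hprim))
      (norm_nonneg _) (by positivity)

section Imprimitive

theorem sum_comp_eq_card_ker_mul_sum {G H : Type*} [Group G] [Group H] [Fintype G] [Fintype H]
    [DecidableEq H] {φ : G →* H} (hφ : Function.Surjective φ) (F : H → ℂ) :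
    ∑ x, F (φ x) = #{x | φ x = 1} * ∑ y, F y := by
  rw [← sum_fiberwise univ φ, mul_sum]
  refine sum_congr rfl fun y _ => ?_
  rw [sum_congr rfl (g := fun _ => F y) fun x hx => by rw [(mem_filter.1 hx).2], sum_const,
    nsmul_eq_mul, MonoidHom.card_fiber_eq_of_mem_range φ (hφ y) (hφ 1)]

variable {g d : ℕ} [NeZero (g * d)]

theorem card_filter_unitsMap_eq_one_le :
    #{x : (ZMod (g * d))ˣ | ZMod.unitsMap (Dvd.intro_left g rfl : d ∣ g * d) x = 1} ≤ g := by
  have hg : 0 < g := Nat.pos_of_ne_zero (left_ne_zero_of_mul (NeZero.ne (g * d)))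
  have hinj : Set.InjOn (fun x : (ZMod (g * d))ˣ => (x : ZMod (g * d)) - 1) Set.univ :=
    fun x _ y _ hxy => Units.ext (sub_left_injective hxy)
  refine (card_le_card_of_injOn _ (fun x hx => ?_) (hinj.mono (Set.subset_univ _))).trans
    (IsAddCyclic.card_nsmul_eq_zero_le (α := ZMod (g * d)) hg)
  have hker : ZMod.castHom (Dvd.intro_left g rfl) (ZMod d) ((x : ZMod (g * d)) - 1) = 0 := by
    rw [map_sub, map_one, sub_eq_zero]
    exact congrArg Units.val (mem_filter.1 hx).2
  obtain ⟨j, hj⟩ := ZMod.intCast_surjective ((x : ZMod (g * d)) - 1)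
  rw [← hj, map_intCast, ZMod.intCast_zmod_eq_zero_iff_dvd] at hker
  rw [mem_coe, mem_filter_univ, ← hj, nsmul_eq_mul, ← Int.cast_natCast g, ← Int.cast_mul,
    ZMod.intCast_zmod_eq_zero_iff_dvd, Nat.cast_mul]
  exact mul_dvd_mul_left _ hker

variable [NeZero d]

theorem stdAddChar_natCast_mul (x : ZMod (g * d)) :
    ZMod.stdAddChar ((g : ZMod (g * d)) * x) =
      ZMod.stdAddChar (ZMod.castHom (Dvd.intro_left g rfl) (ZMod d) x) := by
  have hg : (g : ℂ) ≠ 0 := Nat.cast_ne_zero.2 (left_ne_zero_of_mul (NeZero.ne (g * d)))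
  have hd : (d : ℂ) ≠ 0 := Nat.cast_ne_zero.2 (NeZero.ne d)
  obtain ⟨j, rfl⟩ := ZMod.intCast_surjective x
  rw [map_intCast, ← Int.cast_natCast g, ← Int.cast_mul, ZMod.stdAddChar_coe, ZMod.stdAddChar_coe]
  congr 1
  push_cast
  field_simp

theorem norm_powKloostermanSum_natCast_mul_le (K : ℕ) (a b : ZMod (g * d)) :
    ‖powKloostermanSum ZMod.stdAddChar K ((g : ZMod (g * d)) * a) ((g : ZMod (g * d)) * b)‖ ≤
      g * ‖powKloostermanSum ZMod.stdAddChar K (ZMod.castHom (Dvd.intro_left g rfl) (ZMod d) a)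
        (ZMod.castHom (Dvd.intro_left g rfl) (ZMod d) b)‖ := by
  have hdvd : d ∣ g * d := Dvd.intro_left g rfl
  have hreduce (x : (ZMod (g * d))ˣ) :
      ZMod.stdAddChar (powPhase K ((g : ZMod (g * d)) * a) ((g : ZMod (g * d)) * b) x) =
      ZMod.stdAddChar (powPhase K (ZMod.castHom hdvd (ZMod d) a) (ZMod.castHom hdvd (ZMod d) b)
        (ZMod.unitsMap hdvd x)) := by
    rw [← mul_powPhase, stdAddChar_natCast_mul, map_powPhase]
    rfl
  rw [powKloostermanSum, sum_congr rfl fun x _ => hreduce x,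
    sum_comp_eq_card_ker_mul_sum (ZMod.unitsMap_surjective hdvd) fun y =>
      ZMod.stdAddChar (powPhase K _ _ y), norm_mul, Complex.norm_natCast]
  exact mul_le_mul_of_nonneg_right (Nat.cast_le.2 card_filter_unitsMap_eq_one_le)
    (norm_nonneg _)

end Imprimitive

theorem isCoprime_natCast_zmod {s t d : ℕ} (h : (s.gcd t).gcd d = 1) :
    IsCoprime (s : ZMod d) (t : ZMod d) := by
  have hunit : IsUnit ((s.gcd t : ℕ) : ZMod d) := (ZMod.isUnit_iff_coprime _ _).2 h
  have hbezout :
      ((s.gcd t : ℕ) : ZMod d) = s * (s.gcdA t : ZMod d) + t * (s.gcdB t : ZMod d) := by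
    exact_mod_cast congrArg (Int.cast : ℤ → ZMod d) (Nat.gcd_eq_gcd_ab s t)
  obtain ⟨c, hc⟩ := hunit.exists_left_inv
  exact ⟨c * s.gcdA t, c * s.gcdB t, by linear_combination hc - c * hbezout⟩

theorem norm_powKloostermanSum_stdAddChar_le {K : ℕ} (hK : 0 < K) {q : ℕ} [NeZero q] (hq : Odd q)
    (u v : ℕ) : ‖powKloostermanSum (ZMod.stdAddChar (N := q)) K (u : ZMod q) (v : ZMod q)‖ ≤
      (2 * (K : ℝ) ^ 3) ^ #q.primeFactors * √q * √((u.gcd v).gcd q : ℕ) := by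
  obtain ⟨g, hg⟩ : ∃ g, g = (u.gcd v).gcd q := ⟨_, rfl⟩
  have hg₀ : 0 < g := hg ▸ Nat.gcd_pos_of_pos_right _ (NeZero.pos q)
  rw [← hg]
  obtain ⟨d, rfl⟩ : g ∣ q := hg ▸ Nat.gcd_dvd_right _ _
  obtain ⟨s, rfl⟩ : g ∣ u := hg ▸ (Nat.gcd_dvd_left _ _).trans (Nat.gcd_dvd_left _ _)
  obtain ⟨t, rfl⟩ : g ∣ v := hg ▸ (Nat.gcd_dvd_left _ _).trans (Nat.gcd_dvd_right _ _)
  have : NeZero d := ⟨right_ne_zero_of_mul (NeZero.ne (g * d))⟩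
  have hst : IsCoprime (s : ZMod d) t := by
    refine isCoprime_natCast_zmod ?_
    rw [Nat.gcd_mul_left, Nat.gcd_mul_left] at hg
    exact Nat.eq_of_mul_eq_mul_left hg₀ (by rw [← hg, mul_one])
  have hC : 1 ≤ 2 * (K : ℝ) ^ 3 := by
    have : (1 : ℝ) ≤ (K : ℝ) ^ 3 := one_le_pow₀ (by exact_mod_cast hK)
    linarith
  have hω : #d.primeFactors ≤ #(g * d).primeFactors :=
    card_le_card (Nat.primeFactors_mono (Dvd.intro_left g rfl) (NeZero.ne _))
  have hreduce := norm_powKloostermanSum_natCast_mul_le (g := g) (d := d) K s t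
  rw [map_natCast, map_natCast] at hreduce
  rw [Nat.cast_mul, Nat.cast_mul]
  calc ‖powKloostermanSum (ZMod.stdAddChar (N := g * d)) K (g * s) (g * t)‖
      ≤ g * ((2 * (K : ℝ) ^ 3) ^ #d.primeFactors * √d) := by
        refine hreduce.trans ?_
        gcongr
        exact norm_powKloostermanSum_le hK d (Nat.odd_mul.1 hq).2 hst
          (ZMod.isPrimitive_stdAddChar d)
    _ ≤ g * ((2 * (K : ℝ) ^ 3) ^ #(g * d).primeFactors * √d) := by gcongr
    _ = (2 * (K : ℝ) ^ 3) ^ #(g * d).primeFactors * √(g * d : ℕ) * √g := by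
        rw [Nat.cast_mul, Real.sqrt_mul (Nat.cast_nonneg g)]
        linear_combination (-(2 * (K : ℝ) ^ 3) ^ #(g * d).primeFactors * √d) *
          Real.mul_self_sqrt (Nat.cast_nonneg g)

/-! ### Parity of residues -/

section Parity

variable {q : ℕ}

/-- The sign `(-1) ^ r`, where `r` is the least nonnegative residue of `x` modulo `q`: two elements
have residues of the same parity exactly when the product of their signs is `1`. -/
def paritySign (x : ZMod q) : ℂ := (-1) ^ x.val

/-- The integer `|q - 2 r|`, where `r` is the least nonnegative residue of `u` modulo `q`. It is
twice the distance from `r` to `q / 2`, and governs the size of the Fourier transform of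
`paritySign` at `u`. -/
def twiceDistHalf (u : ZMod q) : ℕ := ((q : ℤ) - 2 * (u.val : ℤ)).natAbs

theorem twiceDistHalf_pos (hq : Odd q) (u : ZMod q) : 0 < twiceDistHalf u := by
  obtain ⟨m, hm⟩ := hq
  rw [twiceDistHalf]
  lia

theorem dvd_twiceDistHalf {g : ℕ} (hg : g ∣ q) {u : ZMod q} (hu : g ∣ u.val) :
    g ∣ twiceDistHalf u := by
  rw [twiceDistHalf, ← Int.natCast_dvd]
  exact dvd_sub (Int.natCast_dvd_natCast.2 hg) ((Int.natCast_dvd_natCast.2 hu).mul_left 2)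

theorem ite_even_add_ite_odd_eq_paritySign (x y : ZMod q) :
    (if (x.val : ℤ) ≡ 0 [ZMOD 2] ∧ (y.val : ℤ) ≡ 0 [ZMOD 2] then (1 : ℂ) else 0) +
        (if (x.val : ℤ) ≡ 1 [ZMOD 2] ∧ (y.val : ℤ) ≡ 1 [ZMOD 2] then 1 else 0) =
      1 / 2 + 1 / 2 * (paritySign x * paritySign y) := by
  have hzero (n : ℕ) : (n : ℤ) ≡ 0 [ZMOD 2] ↔ Even n := by rw [Int.ModEq, Nat.even_iff]; lia
  have hone (n : ℕ) : (n : ℤ) ≡ 1 [ZMOD 2] ↔ ¬Even n := by rw [Int.ModEq, Nat.even_iff]; lia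
  simp only [paritySign, hzero, hone, neg_one_pow_eq_ite]
  by_cases hx : Even x.val <;> by_cases hy : Even y.val <;> norm_num [hx, hy]

variable [NeZero q]

theorem twiceDistHalf_le (u : ZMod q) : twiceDistHalf u ≤ q := by
  have := ZMod.val_lt u
  rw [twiceDistHalf]
  lia

theorem card_filter_twiceDistHalf_eq_le_two (m : ℕ) :
    #{u : ZMod q | twiceDistHalf u = m} ≤ 2 := by
  refine (card_le_card (t := {(((q - m) / 2 : ℕ) : ZMod q), (((q + m) / 2 : ℕ) : ZMod q)})
    fun u hu => ?_).trans card_le_two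
  have hval : u.val = (q - m) / 2 ∨ u.val = (q + m) / 2 := by
    have := (mem_filter.1 hu).2
    rw [twiceDistHalf] at this
    lia
  rw [mem_insert, mem_singleton, ← ZMod.natCast_zmod_val u]
  exact hval.imp (congrArg Nat.cast) (congrArg Nat.cast)

theorem sum_filter_dvd_inv_twiceDistHalf_le (hq : Odd q) {g : ℕ} (hg : 0 < g) :
    ∑ u : ZMod q with g ∣ twiceDistHalf u, (twiceDistHalf u : ℝ)⁻¹ ≤ 2 / g * harmonic q := by
  have hmaps (u : ZMod q) (hu : u ∈ ({u | g ∣ twiceDistHalf u} : Finset (ZMod q))) :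
      twiceDistHalf u / g ∈ Icc 1 q :=
    mem_Icc.2 ⟨Nat.div_pos (Nat.le_of_dvd (twiceDistHalf_pos hq u) (mem_filter.1 hu).2) hg,
      (Nat.div_le_self _ _).trans (twiceDistHalf_le u)⟩
  rw [← sum_fiberwise_of_maps_to hmaps, harmonic_eq_sum_Icc, Rat.cast_sum, mul_sum]
  refine sum_le_sum fun m _ => ?_
  rw [filter_filter]
  have hval (u : ZMod q)
      (hu : u ∈ ({u | g ∣ twiceDistHalf u ∧ twiceDistHalf u / g = m} : Finset (ZMod q))) :
      twiceDistHalf u = g * m := by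
    obtain ⟨hdvd, rfl⟩ := (mem_filter.1 hu).2
    exact (Nat.mul_div_cancel' hdvd).symm
  have hcard : #({u | g ∣ twiceDistHalf u ∧ twiceDistHalf u / g = m} : Finset (ZMod q)) ≤ 2 :=
    (card_le_card fun u hu => mem_filter.2 ⟨mem_univ u, hval u hu⟩).trans
      (card_filter_twiceDistHalf_eq_le_two (g * m))
  calc ∑ u : ZMod q with g ∣ twiceDistHalf u ∧ twiceDistHalf u / g = m, (twiceDistHalf u : ℝ)⁻¹
      ≤ 2 * ((g * m : ℕ) : ℝ)⁻¹ := by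
        rw [sum_congr rfl fun u hu => by rw [hval u hu], sum_const, nsmul_eq_mul]
        gcongr
        exact_mod_cast hcard
    _ = 2 / g * ((m : ℚ)⁻¹ : ℚ) := by
        push_cast
        rw [mul_inv, div_eq_mul_inv, mul_assoc]

theorem sum_sum_inv_twiceDistHalf_mul_sqrt_gcd_le (hq : Odd q) :
    ∑ u : ZMod q, ∑ v : ZMod q, (twiceDistHalf u : ℝ)⁻¹ * (twiceDistHalf v : ℝ)⁻¹ *
      √((u.val.gcd v.val).gcd q : ℕ) ≤ 4 * (harmonic q : ℝ) ^ 3 := by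
  let c (g : ℕ) (u : ZMod q) : ℝ := if g ∣ twiceDistHalf u then (twiceDistHalf u : ℝ)⁻¹ else 0
  have hc (g : ℕ) (u : ZMod q) : 0 ≤ c g u := by positivity
  have hterm (u v : ZMod q) : (twiceDistHalf u : ℝ)⁻¹ * (twiceDistHalf v : ℝ)⁻¹ *
      √((u.val.gcd v.val).gcd q : ℕ) ≤ ∑ g ∈ Icc 1 q, √g * (c g u * c g v) := by
    have hg := Nat.gcd_dvd_right (u.val.gcd v.val) q
    have hu : (u.val.gcd v.val).gcd q ∣ twiceDistHalf u :=
      dvd_twiceDistHalf hg ((Nat.gcd_dvd_left _ _).trans (Nat.gcd_dvd_left _ _))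
    have hv : (u.val.gcd v.val).gcd q ∣ twiceDistHalf v :=
      dvd_twiceDistHalf hg ((Nat.gcd_dvd_left _ _).trans (Nat.gcd_dvd_right _ _))
    refine le_of_eq_of_le ?_ (single_le_sum (f := fun g : ℕ => √g * (c g u * c g v))
      (fun g _ => mul_nonneg (Real.sqrt_nonneg g) (mul_nonneg (hc g u) (hc g v)))
      (mem_Icc.2 ⟨Nat.gcd_pos_of_pos_right _ (NeZero.pos q), Nat.le_of_dvd (NeZero.pos q) hg⟩))
    simp only [c, if_pos hu, if_pos hv, mul_comm]
  calc _ ≤ ∑ u : ZMod q, ∑ v : ZMod q, ∑ g ∈ Icc 1 q, √g * (c g u * c g v) :=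
        sum_le_sum fun u _ => sum_le_sum fun v _ => hterm u v
    _ = ∑ g ∈ Icc 1 q, √g * (∑ u, c g u) ^ 2 := by
        simp_rw [sum_comm (t := Icc 1 q), sq, sum_mul_sum, mul_sum]
    _ ≤ ∑ g ∈ Icc 1 q, 4 * (harmonic q : ℝ) ^ 2 * (g : ℝ)⁻¹ := by
        refine sum_le_sum fun g hg => ?_
        have hg₁ : (1 : ℝ) ≤ g := Nat.one_le_cast.2 (mem_Icc.1 hg).1
        have hsum : ∑ u, c g u ≤ 2 / g * harmonic q := by
          rw [← sum_filter]
          exact sum_filter_dvd_inv_twiceDistHalf_le hq (mem_Icc.1 hg).1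
        calc √g * (∑ u, c g u) ^ 2 ≤ g * (2 / g * harmonic q) ^ 2 := by
              have := sum_nonneg fun u (_ : u ∈ univ) => hc g u
              gcongr
              exact Real.sqrt_le_iff.2 ⟨by positivity, by nlinarith⟩
          _ = 4 * (harmonic q : ℝ) ^ 2 * (g : ℝ)⁻¹ := by field_simp; ring
    _ = 4 * (harmonic q : ℝ) ^ 3 := by
        rw [← mul_sum, harmonic_eq_sum_Icc]
        push_cast
        ring

theorem le_norm_one_add_stdAddChar_neg (u : ZMod q) :
    2 * (twiceDistHalf u / q : ℝ) ≤ ‖1 + ZMod.stdAddChar (-u)‖ := by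
  have hq : (0 : ℝ) < q := Nat.cast_pos.2 (NeZero.pos q)
  have hdist : (twiceDistHalf u : ℝ) = |(q : ℝ) - 2 * u.val| := by
    rw [twiceDistHalf, Nat.cast_natAbs]
    push_cast
    rfl
  set θ : ℝ := Real.pi * (q - 2 * u.val) / q with hθ
  have hexp : ZMod.stdAddChar (-u) = -Complex.exp (Complex.I * θ) := by
    have hu : -u = ((-(u.val : ℤ) : ℤ) : ZMod q) := by simp
    have hq' : (q : ℂ) ≠ 0 := NeZero.ne _
    rw [hu, ZMod.stdAddChar_coe, ← neg_one_mul (Complex.exp _), ← Complex.exp_pi_mul_I,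
      ← Complex.exp_add, Complex.exp_eq_exp_iff_exists_int]
    refine ⟨-1, ?_⟩
    rw [hθ]
    push_cast
    field_simp
    ring
  have habs : |θ / 2| = Real.pi / 2 * (twiceDistHalf u / q) := by
    rw [hdist, hθ, abs_div, abs_div, abs_mul, abs_of_pos Real.pi_pos, abs_of_pos hq, abs_two]
    ring
  have hsin := Real.mul_abs_le_abs_sin (x := θ / 2) (by
    rw [habs]
    exact mul_le_of_le_one_right Real.pi_div_two_pos.le
      ((div_le_one hq).2 (Nat.cast_le.2 (twiceDistHalf_le u))))
  rw [habs, ← mul_assoc, div_mul_div_cancel₀ Real.pi_ne_zero, div_self two_ne_zero, one_mul] at hsin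
  rw [hexp, ← sub_eq_add_neg, norm_sub_rev, Complex.norm_exp_I_mul_ofReal_sub_one, norm_mul,
    Real.norm_two, Real.norm_eq_abs]
  gcongr

theorem dft_paritySign_mul_one_add_stdAddChar_neg (hq : Odd q) (u : ZMod q) :
    ZMod.dft paritySign u * (1 + ZMod.stdAddChar (-u)) = 2 := by
  set ζ : ℂ := ZMod.stdAddChar (-u) with hζ
  have hζq : ζ ^ q = 1 := by
    rw [hζ, ← AddChar.map_nsmul_eq_pow, nsmul_eq_mul, ZMod.natCast_self, zero_mul,
      AddChar.map_zero_eq_one]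
  have hgeom : ZMod.dft paritySign u = ∑ j ∈ range q, (-ζ) ^ j := by
    rw [ZMod.dft_apply]
    refine sum_nbij' ZMod.val Nat.cast (fun y _ => mem_range.2 (ZMod.val_lt y))
      (fun _ _ => mem_univ _) (fun y _ => ZMod.natCast_zmod_val y)
      (fun j hj => ZMod.val_cast_of_lt (mem_range.1 hj)) fun y _ => ?_
    rw [paritySign, neg_pow ζ, hζ, ← AddChar.map_nsmul_eq_pow, nsmul_eq_mul, ZMod.natCast_zmod_val,
      smul_eq_mul, mul_comm, mul_neg]
  have := geom_sum_mul (-ζ) q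
  rw [hq.neg_pow, hζq, ← hgeom] at this
  linear_combination -this

theorem norm_dft_paritySign_le (hq : Odd q) (u : ZMod q) :
    ‖ZMod.dft paritySign u‖ ≤ q * (twiceDistHalf u : ℝ)⁻¹ := by
  have hq₀ : (0 : ℝ) < q := Nat.cast_pos.2 (NeZero.pos q)
  have hnorm := congrArg norm (dft_paritySign_mul_one_add_stdAddChar_neg hq u)
  rw [norm_mul, Complex.norm_two] at hnorm
  have hle := mul_le_mul_of_nonneg_left (le_norm_one_add_stdAddChar_neg u)
    (norm_nonneg (ZMod.dft paritySign u))
  rw [← div_eq_mul_inv, le_div_iff₀ (Nat.cast_pos.2 (twiceDistHalf_pos hq u))]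
  rw [hnorm, ← mul_div_assoc, ← mul_div_assoc, div_le_iff₀ hq₀] at hle
  linarith

theorem eq_sum_dft_mul_stdAddChar (f : ZMod q → ℂ) (x : ZMod q) :
    f x = (q : ℂ)⁻¹ * ∑ u, ZMod.dft f u * ZMod.stdAddChar (u * x) := by
  conv_lhs => rw [← ZMod.dft.symm_apply_apply f, ZMod.invDFT_apply]
  simp only [smul_eq_mul, mul_comm]

theorem sum_mul_comp_pow_eq_sum_dft (f g : ZMod q → ℂ) (K : ℕ) :
    ∑ x : (ZMod q)ˣ, f (x ^ K : (ZMod q)ˣ) * g ((x ^ K)⁻¹ : (ZMod q)ˣ) =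
      (q : ℂ)⁻¹ ^ 2 * ∑ u, ∑ v, ZMod.dft f u * ZMod.dft g v *
        powKloostermanSum ZMod.stdAddChar K u v := by
  simp_rw [powKloostermanSum, mul_sum, sum_comm (t := (univ : Finset (ZMod q)ˣ))]
  refine sum_congr rfl fun x _ => ?_
  rw [eq_sum_dft_mul_stdAddChar f, eq_sum_dft_mul_stdAddChar g, mul_mul_mul_comm, ← sq, sum_mul_sum,
    mul_sum]
  refine sum_congr rfl fun u _ => ?_
  rw [mul_sum]
  refine sum_congr rfl fun v _ => ?_
  rw [powPhase, AddChar.map_add_eq_mul, mul_mul_mul_comm]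

theorem norm_sum_paritySign_pow_mul_le {K : ℕ} (hK : 0 < K) (hq : Odd q) :
    ‖∑ x : (ZMod q)ˣ, paritySign ((x ^ K : (ZMod q)ˣ) : ZMod q) *
        paritySign (((x ^ K)⁻¹ : (ZMod q)ˣ) : ZMod q)‖ ≤
      4 * (2 * (K : ℝ) ^ 3) ^ #q.primeFactors * √q * (harmonic q : ℝ) ^ 3 := by
  have hq₀ : (q : ℝ) ≠ 0 := NeZero.ne _
  set D : ℝ := (2 * (K : ℝ) ^ 3) ^ #q.primeFactors * √q with hD
  have hterm (u v : ZMod q) : ‖ZMod.dft paritySign u * ZMod.dft paritySign v *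
      powKloostermanSum ZMod.stdAddChar K u v‖ ≤ (q : ℝ) ^ 2 * D *
        ((twiceDistHalf u : ℝ)⁻¹ * (twiceDistHalf v : ℝ)⁻¹ * √((u.val.gcd v.val).gcd q : ℕ)) := by
    have hsum := norm_powKloostermanSum_stdAddChar_le hK hq u.val v.val
    rw [ZMod.natCast_zmod_val, ZMod.natCast_zmod_val, ← hD] at hsum
    rw [norm_mul, norm_mul]
    calc _ ≤ (q * (twiceDistHalf u : ℝ)⁻¹) * (q * (twiceDistHalf v : ℝ)⁻¹) *
          (D * √((u.val.gcd v.val).gcd q : ℕ)) := by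
          gcongr <;> exact norm_dft_paritySign_le hq _
      _ = _ := by ring
  rw [sum_mul_comp_pow_eq_sum_dft, norm_mul, norm_pow, norm_inv, Complex.norm_natCast]
  calc _ ≤ (q : ℝ)⁻¹ ^ 2 * ∑ u : ZMod q, ∑ v : ZMod q, (q : ℝ) ^ 2 * D *
        ((twiceDistHalf u : ℝ)⁻¹ * (twiceDistHalf v : ℝ)⁻¹ * √((u.val.gcd v.val).gcd q : ℕ)) := by
        gcongr
        exact norm_sum_le_of_le _ fun u _ => norm_sum_le_of_le _ fun v _ => hterm u v
    _ = D * ∑ u : ZMod q, ∑ v : ZMod q, (twiceDistHalf u : ℝ)⁻¹ * (twiceDistHalf v : ℝ)⁻¹ *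
          √((u.val.gcd v.val).gcd q : ℕ) := by
        simp_rw [← mul_sum]
        rw [← mul_assoc, ← mul_assoc, inv_pow, inv_mul_cancel₀ (pow_ne_zero 2 hq₀), one_mul]
    _ ≤ D * (4 * (harmonic q : ℝ) ^ 3) := by
        gcongr
        exact sum_sum_inv_twiceDistHalf_mul_sqrt_gcd_le hq
    _ = _ := by rw [hD]; ring

theorem norm_sum_paritySign_zpow_mul_le {k : ℤ} (hk : k ≠ 0) (hq : Odd q) :
    ‖∑ x : (ZMod q)ˣ, paritySign ((x ^ k : (ZMod q)ˣ) : ZMod q) *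
        paritySign (((x ^ k)⁻¹ : (ZMod q)ˣ) : ZMod q)‖ ≤
      4 * (2 * (k.natAbs : ℝ) ^ 3) ^ #q.primeFactors * √q * (harmonic q : ℝ) ^ 3 := by
  have hle := norm_sum_paritySign_pow_mul_le (Int.natAbs_pos.2 hk) hq
  obtain ⟨n, rfl | rfl⟩ := k.eq_nat_or_neg
  · simpa only [zpow_natCast, Int.natAbs_natCast] using hle
  · simpa only [zpow_neg, zpow_natCast, inv_inv, Int.natAbs_neg, Int.natAbs_natCast,
      mul_comm] using hle

theorem cast_lehmerCount_two (a k : ℤ) :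
    (lehmerCount q ![2, 2] ![a, a] ![k, -k] : ℂ) = ∑ x : (ZMod q)ˣ,
      if (((x ^ k : (ZMod q)ˣ) : ZMod q).val : ℤ) ≡ a [ZMOD 2] ∧
        ((((x ^ k)⁻¹ : (ZMod q)ˣ) : ZMod q).val : ℤ) ≡ a [ZMOD 2] then 1 else 0 := by
  rw [lehmerCount, sum_boole]
  congr 2
  refine filter_congr fun x _ => ?_
  rw [Fin.forall_fin_two]
  simp only [Matrix.cons_val_zero, Matrix.cons_val_one, zpow_neg]
  rfl

theorem lehmerCount_add_lehmerCount_sub_eq_sum_paritySign (k : ℤ) :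
    (lehmerCount q ![2, 2] ![0, 0] ![k, -k] + lehmerCount q ![2, 2] ![1, 1] ![k, -k] : ℂ) -
        q.totient / 2 =
      1 / 2 * ∑ x : (ZMod q)ˣ, paritySign ((x ^ k : (ZMod q)ˣ) : ZMod q) *
        paritySign (((x ^ k)⁻¹ : (ZMod q)ˣ) : ZMod q) := by
  rw [cast_lehmerCount_two, cast_lehmerCount_two, ← sum_add_distrib,
    sum_congr rfl fun x _ => ite_even_add_ite_odd_eq_paritySign _ _, sum_add_distrib, ← mul_sum,
    sum_const, card_univ, nsmul_eq_mul, ZMod.card_units_eq_totient]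
  ring

theorem abs_lehmerCount_add_lehmerCount_sub_le {k : ℤ} (hk : k ≠ 0) (hq : Odd q) :
    |(lehmerCount q ![2, 2] ![0, 0] ![k, -k] + lehmerCount q ![2, 2] ![1, 1] ![k, -k] : ℝ) -
        q.totient / 2| ≤
      2 * (2 * (k.natAbs : ℝ) ^ 3) ^ #q.primeFactors * √q * (harmonic q : ℝ) ^ 3 := by
  have hnorm := congrArg norm (lehmerCount_add_lehmerCount_sub_eq_sum_paritySign (q := q) k)
  rw [norm_mul, norm_div, norm_one, Complex.norm_two] at hnorm
  rw [← Real.norm_eq_abs, ← Complex.norm_real]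
  push_cast
  rw [hnorm]
  linarith [norm_sum_paritySign_zpow_mul_le hk hq]

end Parity

theorem pow_card_le_rpow_of_subset_primeFactors {C δ : ℝ} (hC : 0 ≤ C) (hδ : 0 ≤ δ) {q : ℕ}
    (hq : q ≠ 0) {s : Finset ℕ} (hs : s ⊆ q.primeFactors) (hle : ∀ p ∈ s, C ≤ (p : ℝ) ^ δ) :
    C ^ #s ≤ (q : ℝ) ^ δ :=
  calc C ^ #s ≤ ∏ p ∈ s, (p : ℝ) ^ δ := by
        rw [← prod_const]
        exact prod_le_prod (fun _ _ => hC) hle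
    _ ≤ ∏ p ∈ q.primeFactors, (p : ℝ) ^ δ :=
        prod_le_prod_of_subset_of_one_le hs (fun _ _ => by positivity) fun p hp _ =>
          Real.one_le_rpow (Nat.one_le_cast.2 (Nat.prime_of_mem_primeFactors hp).one_le) hδ
    _ = ((∏ p ∈ q.primeFactors, p : ℕ) : ℝ) ^ δ := by
        rw [Nat.cast_prod, Real.finsetProd_rpow _ _ fun _ _ => by positivity]
    _ ≤ (q : ℝ) ^ δ := by
        gcongr
        exact Nat.le_of_dvd (Nat.pos_of_ne_zero hq) (Nat.prod_primeFactors_dvd q)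

theorem exists_pow_card_primeFactors_le (C : ℝ) {δ : ℝ} (hδ : 0 < δ) :
    ∃ D : ℝ, 0 < D ∧ ∀ q : ℕ, q ≠ 0 → C ^ #q.primeFactors ≤ D * (q : ℝ) ^ δ := by
  set B := max 1 |C|
  have hB : 1 ≤ B := le_max_left _ _
  have hB₀ : 0 ≤ B := zero_le_one.trans hB
  obtain ⟨M, hM⟩ := exists_nat_ge (B ^ δ⁻¹)
  refine ⟨B ^ M, by positivity, fun q hq => ?_⟩
  have hlarge (p : ℕ) (hp : M ≤ p) : B ≤ (p : ℝ) ^ δ :=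
    (Real.rpow_inv_le_iff_of_pos hB₀ p.cast_nonneg hδ).1 (hM.trans (Nat.cast_le.2 hp))
  have hsmall : #{p ∈ q.primeFactors | p < M} ≤ M :=
    (card_le_card fun p hp => mem_range.2 (mem_filter.1 hp).2).trans_eq (card_range M)
  calc C ^ #q.primeFactors ≤ B ^ #q.primeFactors :=
        (le_abs_self _).trans ((abs_pow C _).trans_le
          (pow_le_pow_left₀ (abs_nonneg C) (le_max_right _ _) _))
    _ = B ^ #{p ∈ q.primeFactors | p < M} * B ^ #{p ∈ q.primeFactors | ¬p < M} := by
        rw [← pow_add, card_filter_add_card_filter_not]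
    _ ≤ B ^ M * (q : ℝ) ^ δ := by
        gcongr
        exact pow_card_le_rpow_of_subset_primeFactors hB₀ hδ.le hq (filter_subset _ _) fun p hp =>
          hlarge p (not_lt.1 (mem_filter.1 hp).2)

theorem exists_harmonic_pow_le (n : ℕ) {δ : ℝ} (hδ : 0 < δ) :
    ∃ D : ℝ, 0 < D ∧ ∀ q : ℕ, q ≠ 0 → (harmonic q : ℝ) ^ n ≤ D * (q : ℝ) ^ δ := by
  obtain ⟨η, hη, hηn⟩ : ∃ η : ℝ, 0 < η ∧ η * n ≤ δ :=
    ⟨δ / (n + 1), by positivity, by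
      rw [div_mul_eq_mul_div, div_le_iff₀ (by positivity)]
      nlinarith⟩
  refine ⟨(1 + η⁻¹) ^ n, by positivity, fun q hq => ?_⟩
  have hq₁ : (1 : ℝ) ≤ q := Nat.one_le_cast.2 (Nat.one_le_iff_ne_zero.2 hq)
  have hH : (0 : ℝ) ≤ harmonic q := Rat.cast_nonneg.2 (harmonic_pos hq).le
  have hle : (harmonic q : ℝ) ≤ (1 + η⁻¹) * (q : ℝ) ^ η :=
    calc (harmonic q : ℝ) ≤ 1 + Real.log q := harmonic_le_one_add_log q
      _ ≤ (q : ℝ) ^ η + (q : ℝ) ^ η / η :=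
          add_le_add (Real.one_le_rpow hq₁ hη.le) (Real.log_le_rpow_div q.cast_nonneg hη)
      _ = (1 + η⁻¹) * (q : ℝ) ^ η := by ring
  calc (harmonic q : ℝ) ^ n ≤ ((1 + η⁻¹) * (q : ℝ) ^ η) ^ n := by gcongr
    _ = (1 + η⁻¹) ^ n * (q : ℝ) ^ (η * n) := by
        rw [mul_pow, Real.rpow_mul_natCast q.cast_nonneg]
    _ ≤ (1 + η⁻¹) ^ n * (q : ℝ) ^ δ := by gcongr

/-- **Improved Yi–Zhang asymptotic.** For a fixed nonzero integer `k` and every `ε > 0`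
there is `C > 0` such that for every odd `q ≥ 3`,
`|N_q((2,2),(0,0);(k,k)) + N_q((2,2),(1,1);(k,k)) - φ(q)/2| ≤ C q^{1/2+ε}`,
i.e. the number of `n ∈ U_q` for which the least nonnegative residues of `n^k` and
`n^{-k}` modulo `q` have the same parity is `φ(q)/2 + O(q^{1/2+ε})`. -/
theorem lehmer_same_parity (k : ℤ) (hk : k ≠ 0) :
    ∀ ε : ℝ, 0 < ε → ∃ C : ℝ, 0 < C ∧
      ∀ (q : ℕ) [NeZero q], 3 ≤ q → Odd q →
        |((lehmerCount q ![2, 2] ![0, 0] ![k, -k] : ℝ) +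
            (lehmerCount q ![2, 2] ![1, 1] ![k, -k] : ℝ)) - (Nat.totient q : ℝ) / 2| ≤
          C * (q : ℝ) ^ ((1 : ℝ) / 2 + ε) := by
  intro ε hε
  obtain ⟨D₁, hD₁, hω⟩ := exists_pow_card_primeFactors_le (2 * (k.natAbs : ℝ) ^ 3) (half_pos hε)
  obtain ⟨D₂, hD₂, hharmonic⟩ := exists_harmonic_pow_le 3 (half_pos hε)
  refine ⟨2 * D₁ * D₂, by positivity, fun q _ _ hodd => ?_⟩
  have hq : (0 : ℝ) < q := Nat.cast_pos.2 (NeZero.pos q)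
  refine (abs_lehmerCount_add_lehmerCount_sub_le hk hodd).trans ?_
  have hH : (0 : ℝ) ≤ harmonic q := Rat.cast_nonneg.2 (harmonic_pos (NeZero.ne q)).le
  calc _ ≤ 2 * (D₁ * (q : ℝ) ^ (ε / 2)) * √q * (D₂ * (q : ℝ) ^ (ε / 2)) := by
        gcongr
        · exact hω q (NeZero.ne q)
        · exact hharmonic q (NeZero.ne q)
    _ = 2 * D₁ * D₂ * ((q : ℝ) ^ ((1 : ℝ) / 2) * ((q : ℝ) ^ (ε / 2) * (q : ℝ) ^ (ε / 2))) := by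
        rw [Real.sqrt_eq_rpow]
        ring
    _ = 2 * D₁ * D₂ * (q : ℝ) ^ ((1 : ℝ) / 2 + ε) := by
        rw [← Real.rpow_add hq, ← Real.rpow_add hq, add_halves]
end

section
/- Let q ≥ 2, let s ≥ 2, let k = (k_1, …, k_s) be a vector of nonzero integers, let m_1, …, m_s ≥ 1 be integers with gcd(m_j, q) = 1 for all j, and let a_1, …, a_s be integers with 0 ≤ a_j < m_j. For each j, let U_j be the largest integer U with m_j U + a_j < q, let r_j ∈ U_q be the modular inverse of m_j modulo q, and let b_j ∈ {0, 1, …, q−1} satisfy b_j ≡ a_j r_j (mod q). Then N_q(m, a; k) equals the number of tuples (n, u_1, …, u_s) with n ∈ U_q and 0 ≤ u_j ≤ U_j for all j satisfying the system of congruences r_j n^{k_j} ≡ u_j + b_j (mod q) for j = 1, …, s. -/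
open scoped Classical

/-!
For `0 ≤ a < m`, an integer `x` is congruent to `a` modulo `m` exactly when `x = m * u + a` with
`u = x / m`. If `0 ≤ x < q`, this `u` lies in `[0, U]`, and conversely `m * u + a` lies in `[0, q)`
for every `u ∈ [0, U]`, so there the equation may be read modulo `q`, where multiplication by the
inverse `r` of `m` turns it into `r * x ≡ u + a * r`. Hence each `n` counted by `N_q(m, a; k)`
extends to exactly one solution `(n, u)` of the system, and no other `n` does.
-/

lemma inverse_mul_modEq_add_iff_modEq_mul_add {q m r a b : ℤ} (hr : m * r ≡ 1 [ZMOD q])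
    (hb : b ≡ a * r [ZMOD q]) (x u : ℤ) :
    r * x ≡ u + b [ZMOD q] ↔ x ≡ m * u + a [ZMOD q] := by
  constructor <;> intro h
  · calc
      x = 1 * x := (one_mul x).symm
      _ ≡ m * r * x [ZMOD q] := hr.symm.mul_right x
      _ = m * (r * x) := mul_assoc m r x
      _ ≡ m * (u + b) [ZMOD q] := h.mul_left m
      _ ≡ m * (u + a * r) [ZMOD q] := (hb.add_left u).mul_left m
      _ = m * u + m * r * a := by ring
      _ ≡ m * u + 1 * a [ZMOD q] := (hr.mul_right a).add_left (m * u)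
      _ = m * u + a := by rw [one_mul]
  · calc
      r * x ≡ r * (m * u + a) [ZMOD q] := h.mul_left r
      _ = m * r * u + a * r := by ring
      _ ≡ 1 * u + b [ZMOD q] := (hr.mul_right u).add hb.symm
      _ = u + b := by rw [one_mul]

lemma natCast_val_mem_Ico {q : ℕ} [NeZero q] (x : ZMod q) : (x.val : ℤ) ∈ Set.Ico 0 (q : ℤ) :=
  ⟨Int.natCast_nonneg _, mod_cast ZMod.val_lt x⟩

lemma modEq_iff_eq_of_mem_Ico {q x y : ℤ} (hx : x ∈ Set.Ico 0 q) (hy : y ∈ Set.Ico 0 q) :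
    x ≡ y [ZMOD q] ↔ x = y := by
  rw [Int.ModEq, Int.emod_eq_of_lt hx.1 hx.2, Int.emod_eq_of_lt hy.1 hy.2]

lemma eq_mul_add_iff_modEq_and_eq_ediv {m a : ℤ} (ha : a ∈ Set.Ico 0 m) (x u : ℤ) :
    x = m * u + a ↔ x ≡ a [ZMOD m] ∧ u = x / m := by
  have hm : 0 < m := ha.1.trans_lt ha.2
  rw [Int.ModEq, Int.emod_eq_of_lt ha.1 ha.2, and_comm, eq_comm (a := u),
    Int.ediv_emod_unique hm, eq_comm, add_comm]
  exact (and_iff_left ha).symm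

lemma mem_Icc_iff_mul_add_mem_Ico {q m a U : ℤ} (ha : a ∈ Set.Ico 0 m)
    (hU : IsGreatest {V : ℤ | m * V + a < q} U) (u : ℤ) :
    u ∈ Finset.Icc 0 U ↔ m * u + a ∈ Set.Ico 0 q := by
  obtain ⟨ha0, ham⟩ := ha
  rw [Finset.mem_Icc, Set.mem_Ico]
  refine and_congr ⟨fun hu => ?_, fun h => ?_⟩ ⟨fun hu => ?_, fun h => hU.2 h⟩
  · have hm : 0 < m := ha0.trans_lt ham
    positivity
  · by_contra! hu
    have hmu : m * u ≤ m * -1 := mul_le_mul_of_nonneg_left (by lia) (ha0.trans ham.le)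
    linarith
  · have hmu : m * u ≤ m * U := mul_le_mul_of_nonneg_left hu (ha0.trans ham.le)
    exact (add_le_add_left hmu a).trans_lt hU.1

lemma mem_Icc_and_inverse_mul_modEq_iff {q m r a b U x : ℤ} (ha : a ∈ Set.Ico 0 m)
    (hU : IsGreatest {V : ℤ | m * V + a < q} U) (hr : m * r ≡ 1 [ZMOD q])
    (hb : b ≡ a * r [ZMOD q]) (hx : x ∈ Set.Ico 0 q) (u : ℤ) :
    u ∈ Finset.Icc 0 U ∧ r * x ≡ u + b [ZMOD q] ↔ x ≡ a [ZMOD m] ∧ u = x / m := by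
  rw [mem_Icc_iff_mul_add_mem_Ico ha hU, inverse_mul_modEq_add_iff_modEq_mul_add hr hb,
    ← eq_mul_add_iff_modEq_and_eq_ediv ha]
  constructor
  · rintro ⟨hu, h⟩
    exact (modEq_iff_eq_of_mem_Ico hx hu).mp h
  · rintro rfl
    exact ⟨hx, Int.ModEq.rfl⟩

theorem lehmerCount_eq_card_congruence_system_general {α ι : Type*} [Fintype ι] [DecidableEq ι]
    {q : ℤ} {m r a b U : ι → ℤ} (ha : ∀ j, a j ∈ Set.Ico 0 (m j))
    (hU : ∀ j, IsGreatest {V : ℤ | m j * V + a j < q} (U j))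
    (hr : ∀ j, m j * r j ≡ 1 [ZMOD q]) (hb : ∀ j, b j ≡ a j * r j [ZMOD q])
    (S : Finset α) (x : α → ι → ℤ) (hx : ∀ n ∈ S, ∀ j, x n j ∈ Set.Ico 0 q) :
    (S.filter fun n => ∀ j, x n j ≡ a j [ZMOD m j]).card =
      ((S ×ˢ Fintype.piFinset fun j => Finset.Icc 0 (U j)).filter
        fun nu => ∀ j, r j * x nu.1 j ≡ nu.2 j + b j [ZMOD q]).card := by
  have mem_solutions_iff (n : α) (u : ι → ℤ) :
      (n, u) ∈ ((S ×ˢ Fintype.piFinset fun j => Finset.Icc 0 (U j)).filter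
        fun nu => ∀ j, r j * x nu.1 j ≡ nu.2 j + b j [ZMOD q]) ↔
      n ∈ S.filter (fun n => ∀ j, x n j ≡ a j [ZMOD m j]) ∧ u = fun j => x n j / m j := by
    simp only [Finset.mem_filter, Finset.mem_product, Fintype.mem_piFinset, and_assoc,
      ← forall_and, funext_iff]
    exact and_congr_right fun hn => forall_congr' fun j =>
      mem_Icc_and_inverse_mul_modEq_iff (ha j) (hU j) (hr j) (hb j) (hx n hn j) (u j)
  exact Finset.card_nbij' (fun n => (n, fun j => x n j / m j)) Prod.fst
    (fun n hn => (mem_solutions_iff n _).mpr ⟨hn, rfl⟩)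
    (fun _ h => ((mem_solutions_iff _ _).mp h).1) (fun _ _ => rfl)
    (fun _ h => Prod.ext rfl ((mem_solutions_iff _ _).mp h).2.symm)

/-- **Reformulation of `N_q(m, a; k)` as a counting problem for a system of
congruences.** Let `q ≥ 2`, `s ≥ 2`, let `k_j` be nonzero integers, `m_j ≥ 1` coprime
to `q` and `0 ≤ a_j < m_j`. For each `j`, let `U_j` be the largest integer `U` with
`m_j U + a_j < q`, let `r_j ∈ U_q` be the modular inverse of `m_j` modulo `q`, and let
`0 ≤ b_j < q` satisfy `b_j ≡ a_j r_j (mod q)`. Then `N_q(m, a; k)` equals the number of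
tuples `(n, u_1, …, u_s)` with `n ∈ U_q`, `0 ≤ u_j ≤ U_j`, and
`r_j n^{k_j} ≡ u_j + b_j (mod q)` for all `j`. -/
theorem lehmerCount_eq_card_congruence_system
    (q : ℕ) [NeZero q] (hq : 2 ≤ q) (s : ℕ) (hs : 2 ≤ s)
    (k : Fin s → ℤ) (hk : ∀ j, k j ≠ 0)
    (m : Fin s → ℕ) (hm1 : ∀ j, 1 ≤ m j) (hmq : ∀ j, Nat.Coprime (m j) q)
    (a : Fin s → ℤ) (ha : ∀ j, 0 ≤ a j ∧ a j < (m j : ℤ))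
    (U : Fin s → ℤ)
    (hU : ∀ j, (m j : ℤ) * U j + a j < (q : ℤ) ∧
      ∀ V : ℤ, (m j : ℤ) * V + a j < (q : ℤ) → V ≤ U j)
    (r : Fin s → ℕ) (hr : ∀ j, 1 ≤ r j ∧ r j < q ∧ m j * r j ≡ 1 [MOD q])
    (b : Fin s → ℕ) (hb : ∀ j, b j < q ∧ (b j : ℤ) ≡ a j * (r j : ℤ) [ZMOD (q : ℤ)]) :
    lehmerCount q m a k =
      ((Finset.univ ×ˢ Fintype.piFinset fun j => Finset.Icc (0 : ℤ) (U j)).filter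
        fun nu : (ZMod q)ˣ × (Fin s → ℤ) =>
          ∀ j, (r j : ℤ) * (((nu.1 ^ k j : (ZMod q)ˣ) : ZMod q).val : ℤ) ≡
            nu.2 j + (b j : ℤ) [ZMOD (q : ℤ)]).card := by
  rw [lehmerCount]
  convert lehmerCount_eq_card_congruence_system_general ha hU (fun j => mod_cast (hr j).2.2)
    (fun j => (hb j).2) Finset.univ (fun n j => (((n ^ k j : (ZMod q)ˣ) : ZMod q).val : ℤ))
    fun _ _ _ => natCast_val_mem_Ico _
end
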